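/- arXiv:1508.04836 — 2 statements merged into one kernel-verified Lean document; each statement's English description precedes it below -/
import Mathlib

section
/- Let (Ω_n, P_n, π_n) be a sequence of finite irreducible reversible Markov chains. The sequence exhibits a continuous-time cutoff if and only if it exhibits an averaged cutoff. -/
open Matrix Filter Asymptotics

/-- `P` is a stochastic matrix. -/
def IsStochastic {Ω : Type*} [Fintype Ω] (P : Matrix Ω Ω ℝ) : Prop :=
  (∀ x y, 0 ≤ P x y) ∧ ∀ x, ∑ y, P x y = 1

/-- `P` is irreducible. -/
def IsIrreducibleMatrix {Ω : Type*} [Fintype Ω] [DecidableEq Ω] (P : Matrix Ω Ω ℝ) : Prop :=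
  ∀ x y, ∃ n : ℕ, 0 < (P ^ n) x y

/-- `μ` is a probability vector. -/
def IsProbVec {Ω : Type*} [Fintype Ω] (μ : Ω → ℝ) : Prop :=
  (∀ x, 0 ≤ μ x) ∧ ∑ x, μ x = 1

/-- The chain `(P, pi)` is reversible. -/
def IsReversible {Ω : Type*} [Fintype Ω] (P : Matrix Ω Ω ℝ) (pi : Ω → ℝ) : Prop :=
  ∀ x y, pi x * P x y = pi y * P y x

/-- A finite irreducible Markov chain `P` with stationary distribution `pi`. -/
def IsMC {Ω : Type*} [Fintype Ω] [DecidableEq Ω] (P : Matrix Ω Ω ℝ) (pi : Ω → ℝ) : Prop :=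
  IsStochastic P ∧ IsIrreducibleMatrix P ∧ IsProbVec pi ∧ pi ᵥ* P = pi

/-- A finite irreducible reversible Markov chain `P` with stationary distribution `pi`. -/
def IsRevMC {Ω : Type*} [Fintype Ω] [DecidableEq Ω] (P : Matrix Ω Ω ℝ) (pi : Ω → ℝ) : Prop :=
  IsMC P pi ∧ IsReversible P pi

/-- Total-variation distance between two measures on a finite set. -/
noncomputable def tvDist {Ω : Type*} [Fintype Ω] (μ ν : Ω → ℝ) : ℝ :=
  (∑ x, |μ x - ν x|) / 2

/-- The lazy version `(I + P)/2` of `P`. -/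
noncomputable def lazyM {Ω : Type*} [Fintype Ω] [DecidableEq Ω] (P : Matrix Ω Ω ℝ) :
    Matrix Ω Ω ℝ :=
  (2 : ℝ)⁻¹ • (1 + P)

/-- `d_c(t, μ)`: TV distance from stationarity of the continuous-time chain at time `t`,
started from `μ`. -/
noncomputable def contDist {Ω : Type*} [Fintype Ω] [DecidableEq Ω] (P : Matrix Ω Ω ℝ) (pi : Ω → ℝ)
    (t : ℝ) (μ : Ω → ℝ) : ℝ :=
  tvDist (fun y => ∑' k : ℕ, Real.exp (-t) * t ^ k / (Nat.factorial k) * (μ ᵥ* (P ^ k)) y) pi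

/-- `d_L(t, μ)`: TV distance from stationarity of the lazy chain at (discrete) time `t`,
started from `μ`. -/
noncomputable def lazyDist {Ω : Type*} [Fintype Ω] [DecidableEq Ω] (P : Matrix Ω Ω ℝ)
    (pi : Ω → ℝ) (t : ℝ) (μ : Ω → ℝ) : ℝ :=
  tvDist (μ ᵥ* (lazyM P ^ ⌊t⌋₊)) pi

/-- `d_ave(t, μ)`: TV distance from stationarity of the averaged chain at (discrete) time `t`,
started from `μ`. -/
noncomputable def aveDist {Ω : Type*} [Fintype Ω] [DecidableEq Ω] (P : Matrix Ω Ω ℝ) (pi : Ω → ℝ)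
    (t : ℝ) (μ : Ω → ℝ) : ℝ :=
  tvDist (fun y => ((μ ᵥ* (P ^ ⌊t⌋₊)) y + (μ ᵥ* (P ^ (⌊t⌋₊ + 1))) y) / 2) pi

/-- The point mass at `x`. -/
noncomputable def deltaMass {Ω : Type*} [DecidableEq Ω] (x : Ω) : Ω → ℝ :=
  fun y => if y = x then 1 else 0

/-- Worst-case continuous-time distance `d_c(t)`. -/
noncomputable def contDistMax {Ω : Type*} [Fintype Ω] [DecidableEq Ω] (P : Matrix Ω Ω ℝ)
    (pi : Ω → ℝ) (t : ℝ) : ℝ :=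
  ⨆ x : Ω, contDist P pi t (deltaMass x)

/-- Worst-case lazy distance `d_L(t)`. -/
noncomputable def lazyDistMax {Ω : Type*} [Fintype Ω] [DecidableEq Ω] (P : Matrix Ω Ω ℝ)
    (pi : Ω → ℝ) (t : ℝ) : ℝ :=
  ⨆ x : Ω, lazyDist P pi t (deltaMass x)

/-- Worst-case averaged distance `d_ave(t)`. -/
noncomputable def aveDistMax {Ω : Type*} [Fintype Ω] [DecidableEq Ω] (P : Matrix Ω Ω ℝ)
    (pi : Ω → ℝ) (t : ℝ) : ℝ :=
  ⨆ x : Ω, aveDist P pi t (deltaMass x)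

/-- `φ_{α,C}(t) = t + ⌈C t^{(1+2α)/2} √(α log t)⌉`. -/
noncomputable def phiAC (α C t : ℝ) : ℝ :=
  t + ((⌈C * t ^ ((1 + 2 * α) / 2) * Real.sqrt (α * Real.log t)⌉ : ℤ) : ℝ)

/-- `ψ_{α,C}(x) = min (1, x + C |log(2x)|^{-α})`. -/
noncomputable def psiAC (α C x : ℝ) : ℝ :=
  min 1 (x + C * |Real.log (2 * x)| ^ (-α))

/-- `t_c(ε)`, the `ε`-mixing time of the continuous-time chain. -/
noncomputable def contMix {Ω : Type*} [Fintype Ω] [DecidableEq Ω] (P : Matrix Ω Ω ℝ)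
    (pi : Ω → ℝ) (ε : ℝ) : ℝ :=
  sInf {t : ℝ | 0 ≤ t ∧ contDistMax P pi t ≤ ε}

/-- `t_L(ε)`, the `ε`-mixing time of the lazy chain. -/
noncomputable def lazyMix {Ω : Type*} [Fintype Ω] [DecidableEq Ω] (P : Matrix Ω Ω ℝ)
    (pi : Ω → ℝ) (ε : ℝ) : ℕ :=
  sInf {t : ℕ | lazyDistMax P pi t ≤ ε}

/-- `t_ave(ε)`, the `ε`-mixing time of the averaged chain. -/
noncomputable def aveMix {Ω : Type*} [Fintype Ω] [DecidableEq Ω] (P : Matrix Ω Ω ℝ)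
    (pi : Ω → ℝ) (ε : ℝ) : ℕ :=
  sInf {t : ℕ | aveDistMax P pi t ≤ ε}

/-- The sequence of continuous-time chains exhibits cutoff. -/
def ContCutoff {Ω : ℕ → Type} [∀ n, Fintype (Ω n)] [∀ n, DecidableEq (Ω n)]
    (P : ∀ n, Matrix (Ω n) (Ω n) ℝ) (pi : ∀ n, Ω n → ℝ) : Prop :=
  ∀ ε : ℝ, 0 < ε → ε < 1 →
    Tendsto (fun n => contMix (P n) (pi n) ε / contMix (P n) (pi n) (1 - ε)) atTop (nhds 1)

/-- The sequence of lazy chains exhibits cutoff. -/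
def LazyCutoff {Ω : ℕ → Type} [∀ n, Fintype (Ω n)] [∀ n, DecidableEq (Ω n)]
    (P : ∀ n, Matrix (Ω n) (Ω n) ℝ) (pi : ∀ n, Ω n → ℝ) : Prop :=
  ∀ ε : ℝ, 0 < ε → ε < 1 →
    Tendsto (fun n => (lazyMix (P n) (pi n) ε : ℝ) / (lazyMix (P n) (pi n) (1 - ε) : ℝ))
      atTop (nhds 1)

/-- The sequence of averaged chains exhibits cutoff. -/
def AveCutoff {Ω : ℕ → Type} [∀ n, Fintype (Ω n)] [∀ n, DecidableEq (Ω n)]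
    (P : ∀ n, Matrix (Ω n) (Ω n) ℝ) (pi : ∀ n, Ω n → ℝ) : Prop :=
  ∀ ε : ℝ, 0 < ε → ε < 1 →
    Tendsto (fun n => (aveMix (P n) (pi n) ε : ℝ) / (aveMix (P n) (pi n) (1 - ε) : ℝ))
      atTop (nhds 1)

/-- The sequence of continuous-time chains exhibits cutoff with window `w`. -/
def ContCutoffWindow {Ω : ℕ → Type} [∀ n, Fintype (Ω n)] [∀ n, DecidableEq (Ω n)]
    (P : ∀ n, Matrix (Ω n) (Ω n) ℝ) (pi : ∀ n, Ω n → ℝ) (w : ℕ → ℝ) : Prop :=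
  ContCutoff P pi ∧
  (fun n => w n) =o[atTop] (fun n => contMix (P n) (pi n) (1 / 4)) ∧
  ∀ ε : ℝ, 0 < ε → ε ≤ 1 / 4 → ∃ Cε : ℝ, 0 < Cε ∧
    ∀ n, contMix (P n) (pi n) ε - contMix (P n) (pi n) (1 - ε) ≤ Cε * w n

/-- The sequence of averaged chains exhibits cutoff with window `w`. -/
def AveCutoffWindow {Ω : ℕ → Type} [∀ n, Fintype (Ω n)] [∀ n, DecidableEq (Ω n)]
    (P : ∀ n, Matrix (Ω n) (Ω n) ℝ) (pi : ∀ n, Ω n → ℝ) (w : ℕ → ℝ) : Prop :=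
  AveCutoff P pi ∧
  (fun n => w n) =o[atTop] (fun n => (aveMix (P n) (pi n) (1 / 4) : ℝ)) ∧
  ∀ ε : ℝ, 0 < ε → ε ≤ 1 / 4 → ∃ Cε : ℝ, 0 < Cε ∧
    ∀ n, (aveMix (P n) (pi n) ε : ℝ) - (aveMix (P n) (pi n) (1 - ε) : ℝ) ≤ Cε * w n


namespace CutoffProof

lemma hs_congr {f g : ℕ → ℝ} {a b : ℝ} (h : HasSum f a) (hf : ∀ k, g k = f k) (hb : b = a) :
    HasSum g b := by
  have : g = f := funext hf
  rw [this, hb]; exact h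

/-- Poisson weights. -/
noncomputable def pw (t : ℝ) (k : ℕ) : ℝ := Real.exp (-t) * t ^ k / (Nat.factorial k)

lemma pw_nonneg {t : ℝ} (ht : 0 ≤ t) (k : ℕ) : 0 ≤ pw t k := by
  unfold pw; positivity

lemma pw_hasSum (t : ℝ) : HasSum (pw t) 1 := by
  have h := (NormedSpace.expSeries_div_hasSum_exp (𝔸 := ℝ) t).mul_left (Real.exp (-t))
  rw [← Real.exp_eq_exp_ℝ, ← Real.exp_add] at h
  simp only [neg_add_cancel, Real.exp_zero] at h
  refine h.congr_fun ?_ |> id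
  intro k
  unfold pw
  ring

lemma pw_succ (t : ℝ) (k : ℕ) : (k + 1 : ℝ) * pw t (k + 1) = t * pw t k := by
  unfold pw
  rw [Nat.factorial_succ]
  push_cast
  field_simp
  ring

lemma pw_first (t : ℝ) : HasSum (fun k : ℕ => (k : ℝ) * pw t k) t := by
  rw [← hasSum_nat_add_iff' 1]
  simp only [Finset.range_one, Finset.sum_singleton, Nat.cast_zero, zero_mul, sub_zero]
  have h := (pw_hasSum t).mul_left t
  rw [mul_one] at h
  refine hs_congr h (fun k => ?_) rfl
  rw [← pw_succ]; push_cast; ring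

lemma pw_second (t : ℝ) : HasSum (fun k : ℕ => (k : ℝ) ^ 2 * pw t k) (t ^ 2 + t) := by
  rw [← hasSum_nat_add_iff' 1]
  simp only [Finset.range_one, Finset.sum_singleton, Nat.cast_zero]
  have h := ((pw_first t).mul_left t).add ((pw_hasSum t).mul_left t)
  refine hs_congr h (fun k => ?_) ?_
  · have := pw_succ t k
    push_cast
    linear_combination ((k : ℝ) + 1) * this
  · ring

lemma pw_var (t : ℝ) : HasSum (fun k : ℕ => pw t k * ((k : ℝ) - t) ^ 2) t := by
  have h := ((pw_second t).add ((pw_first t).mul_left (-2 * t))).add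
    ((pw_hasSum t).mul_left (t ^ 2))
  refine hs_congr h (fun k => ?_) ?_
  · ring
  · ring

/-- Markov-type bound: a weighted sum of a function dominated by a quadratic. -/
lemma pw_tsum_le {t : ℝ} (ht : 0 ≤ t) {u : ℕ → ℝ} (hu : Summable (fun k => pw t k * u k))
    (A B : ℝ) (h : ∀ k : ℕ, u k ≤ A + B * ((k : ℝ) - t) ^ 2) :
    ∑' k, pw t k * u k ≤ A + B * t := by
  have hs := ((pw_hasSum t).mul_left A).add ((pw_var t).mul_left B)
  rw [mul_one] at hs
  refine hasSum_le (fun k => ?_) hu.hasSum hs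
  nlinarith [mul_le_mul_of_nonneg_left (h k) (pw_nonneg ht k)]

lemma pw_summable_bdd {t : ℝ} (ht : 0 ≤ t) {u : ℕ → ℝ} {C : ℝ} (h : ∀ k, |u k| ≤ C) :
    Summable (fun k => pw t k * u k) := by
  refine Summable.of_norm_bounded (g := fun k => pw t k * C)
    ((pw_hasSum t).summable.mul_right C) (fun k => ?_)
  rw [Real.norm_eq_abs, abs_mul, abs_of_nonneg (pw_nonneg ht k)]
  exact mul_le_mul_of_nonneg_left (h k) (pw_nonneg ht k)

/-- Generating function. -/
lemma pw_gen (t l : ℝ) : HasSum (fun k : ℕ => pw t k * l ^ k) (Real.exp (-(t * (1 - l)))) := by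
  have h := (pw_hasSum (t * l)).mul_left (Real.exp (-(t * (1 - l))))
  rw [mul_one] at h
  refine hs_congr h (fun k => ?_) rfl
  unfold pw
  have : Real.exp (-t) = Real.exp (-(t * (1 - l))) * Real.exp (-(t * l)) := by
    rw [← Real.exp_add]; ring_nf
  rw [this, mul_pow]; ring

section scalar

lemma pow_mul_one_sub_le {x : ℝ} (h0 : 0 ≤ x) (h1 : x ≤ 1) (w : ℕ) :
    x ^ (2 * w) * (1 - x) * (2 * w + 1) ≤ 1 := by
  have h2 : ((2 * w + 1 : ℕ) : ℝ) * x ^ (2 * w) ≤ ∑ i ∈ Finset.range (2 * w + 1), x ^ i := by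
    rw [← nsmul_eq_mul]
    conv_lhs => rw [← Finset.card_range (2 * w + 1)]
    refine Finset.card_nsmul_le_sum _ _ _ (fun i hi => ?_)
    exact pow_le_pow_of_le_one h0 h1 (by have := Finset.mem_range.1 hi; omega)
  have h3 := geom_sum_mul_neg x (2 * w + 1)
  have h4 : 0 ≤ x ^ (2 * w + 1) := by positivity
  push_cast at h2
  nlinarith [mul_le_mul_of_nonneg_right h2 (sub_nonneg.2 h1)]

lemma pow_mul_one_sub_sq_le {l : ℝ} (h0 : -1 ≤ l) (h1 : l ≤ 1) {w : ℕ} (hw : 1 ≤ w) :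
    l ^ (2 * w) * (1 - l ^ 2) ≤ 1 / w := by
  have hx := pow_mul_one_sub_le (abs_nonneg l) (abs_le.2 ⟨h0, h1⟩) w
  have e1 : |l| ^ (2 * w) = l ^ (2 * w) := by
    rw [pow_mul, pow_mul, sq_abs]
  have e2 : l ^ 2 = |l| ^ 2 := (sq_abs l).symm
  rw [e1] at hx
  rw [e2]
  have hw' : (1 : ℝ) ≤ w := by exact_mod_cast hw
  rw [le_div_iff₀ (by linarith)]
  have hp : 0 ≤ l ^ (2 * w) := by rw [pow_mul]; positivity
  have hl : |l| ≤ 1 := abs_le.2 ⟨h0, h1⟩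
  have hq : 0 ≤ l ^ (2 * w) * (1 - |l|) := mul_nonneg hp (by linarith)
  nlinarith [abs_nonneg l, mul_nonneg (mul_nonneg hq (by linarith : 0 ≤ 1 - |l|)) (by linarith : (0:ℝ) ≤ w)]

/-- The scalar bound behind the maximal inequality. -/
lemma scalar_bound {l r : ℝ} (h0 : -1 ≤ l) (hr : 1 ≤ r * (1 - l)) (hr1 : 1 ≤ r)
    {w : ℕ} (hw : 1 ≤ w) (N : ℕ) :
    ((1 + l) / 2) ^ 2 * (l ^ (2 * (w + N)) + ∑ i ∈ Finset.range N, l ^ (2 * (w + i)) *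
      (r / 2 * (1 - l) ^ 2 + 1 / (2 * r) * (1 + l) ^ 2)) ≤ 2 * r / w := by
  have h1 : l ≤ 1 := by
    by_contra h
    nlinarith
  have hb := pow_mul_one_sub_sq_le h0 h1 hw
  set W := l ^ (2 * w) with hW
  have hWn : 0 ≤ W := by rw [hW, pow_mul]; positivity
  rw [← Finset.sum_mul]
  set S := ∑ i ∈ Finset.range N, l ^ (2 * (w + i)) with hS
  have hl2 : l ^ 2 ≤ 1 := by nlinarith
  have hSn : 0 ≤ S := Finset.sum_nonneg (fun i _ => by rw [pow_mul]; positivity)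
  have hS1 : S * (1 - l ^ 2) ≤ W := by
    have : S = W * ∑ i ∈ Finset.range N, (l ^ 2) ^ i := by
      rw [hS, hW, Finset.mul_sum]
      refine Finset.sum_congr rfl (fun i _ => ?_)
      rw [mul_add, pow_add, pow_mul l 2 i]
    rw [this, mul_assoc, geom_sum_mul_neg]
    have : 0 ≤ (l ^ 2) ^ N := by positivity
    nlinarith
  have hT : l ^ (2 * (w + N)) ≤ W := by
    rw [hW, mul_add, pow_add, pow_mul l 2 N]
    have : (l ^ 2) ^ N ≤ 1 := pow_le_one₀ (by positivity) hl2
    nlinarith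
  have hp : 0 ≤ 1 + l := by linarith
  have hm : 0 ≤ 1 - l := by linarith
  have hrp : 0 < r := by linarith
  set q := W * (1 - l ^ 2) with hq
  have hqn : 0 ≤ q := mul_nonneg hWn (by linarith)
  -- term 0
  have t0 : ((1 + l) / 2) ^ 2 * l ^ (2 * (w + N)) ≤ q * r / 2 := by
    calc ((1 + l) / 2) ^ 2 * l ^ (2 * (w + N)) ≤ ((1 + l) / 2) ^ 2 * W := by gcongr
      _ ≤ ((1 + l) / 2) ^ 2 * W * (r * (1 - l)) := le_mul_of_one_le_right (by positivity) hr
      _ = q * r * ((1 + l) / 4) := by rw [hq]; ring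
      _ ≤ q * r * (1 / 2) := mul_le_mul_of_nonneg_left (by linarith) (by positivity)
      _ = _ := by ring
  have t1 : ((1 + l) / 2) ^ 2 * (S * (r / 2 * (1 - l) ^ 2)) ≤ q * r / 8 := by
    calc ((1 + l) / 2) ^ 2 * (S * (r / 2 * (1 - l) ^ 2))
        = (S * (1 - l ^ 2)) * ((1 - l ^ 2) * r / 8) := by ring
      _ ≤ W * ((1 - l ^ 2) * r / 8) := by
          apply mul_le_mul_of_nonneg_right hS1
          have : 0 ≤ 1 - l ^ 2 := by linarith
          positivity
      _ = _ := by rw [hq]; ring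
  have hri : 1 / (2 * r) ≤ (1 - l) / 2 := by
    rw [div_le_iff₀ (by positivity)]; nlinarith
  have t2 : ((1 + l) / 2) ^ 2 * (S * (1 / (2 * r) * (1 + l) ^ 2)) ≤ q * r / 2 := by
    calc ((1 + l) / 2) ^ 2 * (S * (1 / (2 * r) * (1 + l) ^ 2))
        ≤ ((1 + l) / 2) ^ 2 * (S * ((1 - l) / 2 * (1 + l) ^ 2)) := by gcongr
      _ = (S * (1 - l ^ 2)) * ((1 + l) ^ 3 / 8) := by ring
      _ ≤ W * ((1 + l) ^ 3 / 8) := mul_le_mul_of_nonneg_right hS1 (by positivity)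
      _ ≤ W * ((1 + l) ^ 3 / 8) * (r * (1 - l)) := le_mul_of_one_le_right (by positivity) hr
      _ = q * r * ((1 + l) ^ 2 / 8) := by rw [hq]; ring
      _ ≤ q * r * (1 / 2) := mul_le_mul_of_nonneg_left (by nlinarith) (by positivity)
      _ = _ := by ring
  have hfin : q * r ≤ r / w := by
    calc q * r ≤ 1 / w * r := by gcongr
      _ = _ := by ring
  have : 0 ≤ r / w := by positivity
  have e : 2 * r / w = 2 * (r / w) := by ring
  rw [e]
  nlinarith

/-- Pointwise maximal bound. -/
lemma pointwise_max (a : ℕ → ℝ) {r : ℝ} (hr : 0 < r) (w N : ℕ) (m : ℕ) (h1 : w ≤ m)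
    (h2 : m ≤ w + N) :
    a m ^ 2 ≤ a (w + N) ^ 2 + ∑ i ∈ Finset.range N, (r / 2 * (a (w + i) - a (w + i + 1)) ^ 2
      + 1 / (2 * r) * (a (w + i) + a (w + i + 1)) ^ 2) := by
  have key : ∀ x y : ℝ, x ^ 2 - y ^ 2 ≤ r / 2 * (x - y) ^ 2 + 1 / (2 * r) * (x + y) ^ 2 := by
    intro x y
    have : r / 2 * (x - y) ^ 2 + 1 / (2 * r) * (x + y) ^ 2 - (x ^ 2 - y ^ 2)
        = (r * (x - y) - (x + y)) ^ 2 / (2 * r) := by field_simp; ring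
    have h : 0 ≤ (r * (x - y) - (x + y)) ^ 2 / (2 * r) := by positivity
    linarith
  obtain ⟨j, rfl⟩ := Nat.exists_eq_add_of_le h1
  have hj : j ≤ N := by omega
  clear h1 h2
  induction N, hj using Nat.le_induction with
  | base =>
    have : 0 ≤ ∑ i ∈ Finset.range j, (r / 2 * (a (w + i) - a (w + i + 1)) ^ 2
      + 1 / (2 * r) * (a (w + i) + a (w + i + 1)) ^ 2) :=
      Finset.sum_nonneg (fun i _ => by positivity)
    linarith
  | succ n hn ih =>
    rw [Finset.sum_range_succ]
    have := key (a (w + n)) (a (w + n + 1))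
    have e : w + (n + 1) = w + n + 1 := by ring
    rw [e]
    linarith

end scalar

set_option linter.unusedSectionVars false

section basics

variable {Ω : Type*} [Fintype Ω] [DecidableEq Ω]

lemma stoch_mulVec_nonneg {M : Matrix Ω Ω ℝ} (hM : IsStochastic M) {f : Ω → ℝ}
    (hf : ∀ y, 0 ≤ f y) (x : Ω) : 0 ≤ (M *ᵥ f) x :=
  Finset.sum_nonneg (fun y _ => mul_nonneg (hM.1 x y) (hf y))

lemma stoch_mulVec_mono {M : Matrix Ω Ω ℝ} (hM : IsStochastic M) {f g : Ω → ℝ}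
    (hf : ∀ y, f y ≤ g y) (x : Ω) : (M *ᵥ f) x ≤ (M *ᵥ g) x :=
  Finset.sum_le_sum (fun y _ => mul_le_mul_of_nonneg_left (hf y) (hM.1 x y))

lemma stoch_mulVec_const {M : Matrix Ω Ω ℝ} (hM : IsStochastic M) (c : ℝ) (x : Ω) :
    (M *ᵥ (fun _ => c)) x = c := by
  simp only [mulVec, dotProduct]
  rw [← Finset.sum_mul, hM.2 x, one_mul]

lemma stoch_mulVec_le {M : Matrix Ω Ω ℝ} (hM : IsStochastic M) {f : Ω → ℝ} {C : ℝ}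
    (hf : ∀ y, f y ≤ C) (x : Ω) : (M *ᵥ f) x ≤ C := by
  have := stoch_mulVec_mono hM (g := fun _ => C) hf x
  rwa [stoch_mulVec_const hM] at this

lemma stoch_mulVec_abs_le {M : Matrix Ω Ω ℝ} (hM : IsStochastic M) {f : Ω → ℝ} {C : ℝ}
    (hf : ∀ y, |f y| ≤ C) (x : Ω) : |(M *ᵥ f) x| ≤ C := by
  rw [abs_le]
  constructor
  · have := stoch_mulVec_mono hM (f := fun _ => -C) (fun y => (abs_le.1 (hf y)).1) x
    rwa [stoch_mulVec_const hM] at this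
  · exact stoch_mulVec_le hM (fun y => (abs_le.1 (hf y)).2) x

lemma stoch_pow {P : Matrix Ω Ω ℝ} (hP : IsStochastic P) (k : ℕ) : IsStochastic (P ^ k) := by
  induction k with
  | zero =>
    refine ⟨fun x y => ?_, fun x => ?_⟩
    · rw [pow_zero, Matrix.one_apply]; split_ifs <;> norm_num
    · simp [Matrix.one_apply]
  | succ k ih =>
    refine ⟨fun x y => ?_, fun x => ?_⟩
    · rw [pow_succ, Matrix.mul_apply]
      exact Finset.sum_nonneg (fun z _ => mul_nonneg (ih.1 x z) (hP.1 z y))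
    · have h1 : ∑ y, (P ^ (k + 1)) x y = ((P ^ (k + 1)) *ᵥ (fun _ => (1 : ℝ))) x := by
        simp [mulVec, dotProduct]
      have h2 : P *ᵥ (fun _ => (1 : ℝ)) = fun _ => 1 := by
        funext z; exact stoch_mulVec_const hP 1 z
      rw [h1, pow_succ, ← Matrix.mulVec_mulVec, h2]
      exact stoch_mulVec_const ih 1 x

lemma pow_succ_mulVec (P : Matrix Ω Ω ℝ) (k : ℕ) (f : Ω → ℝ) :
    P ^ (k + 1) *ᵥ f = P *ᵥ (P ^ k *ᵥ f) := by
  rw [pow_succ', Matrix.mulVec_mulVec]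

lemma pi_pow {P : Matrix Ω Ω ℝ} {pi : Ω → ℝ} (h : pi ᵥ* P = pi) (k : ℕ) :
    pi ᵥ* (P ^ k) = pi := by
  induction k with
  | zero => simp
  | succ k ih => rw [pow_succ, ← Matrix.vecMul_vecMul, ih, h]

lemma pi_pos {P : Matrix Ω Ω ℝ} {pi : Ω → ℝ} (h : IsMC P pi) (x : Ω) : 0 < pi x := by
  obtain ⟨hS, hI, hp, hst⟩ := h
  have : ∃ y, 0 < pi y := by
    by_contra hn
    push Not at hn
    have := Finset.sum_nonpos (s := Finset.univ) (f := pi) (fun y _ => hn y)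
    rw [hp.2] at this
    linarith
  obtain ⟨y, hy⟩ := this
  obtain ⟨n, hn⟩ := hI y x
  have h1 : (pi ᵥ* (P ^ n)) x = pi x := by rw [pi_pow hst]
  rw [← h1]
  simp only [vecMul, dotProduct]
  exact Finset.sum_pos' (fun z _ => mul_nonneg (hp.1 z) ((stoch_pow hS n).1 z x))
    ⟨y, Finset.mem_univ _, mul_pos hy hn⟩

/-! total variation -/

lemma tv_ge {μ ν : Ω → ℝ} (hs : ∑ y, μ y = ∑ y, ν y) {f : Ω → ℝ} (hf0 : ∀ y, 0 ≤ f y)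
    (hf1 : ∀ y, f y ≤ 1) : |∑ y, μ y * f y - ∑ y, ν y * f y| ≤ tvDist μ ν := by
  have e : ∑ y, μ y * f y - ∑ y, ν y * f y = ∑ y, (μ y - ν y) * (f y - 1 / 2) := by
    have : ∑ y, (μ y - ν y) * (f y - 1 / 2) = ∑ y, μ y * f y - ∑ y, ν y * f y
        - (∑ y, μ y - ∑ y, ν y) / 2 := by
      rw [← Finset.sum_sub_distrib, ← Finset.sum_sub_distrib, Finset.sum_div,
        ← Finset.sum_sub_distrib]
      exact Finset.sum_congr rfl (fun y _ => by ring)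
    rw [this, hs]; ring
  rw [e, tvDist, Finset.sum_div]
  refine (Finset.abs_sum_le_sum_abs _ _).trans (Finset.sum_le_sum (fun y _ => ?_))
  rw [abs_mul]
  have : |f y - 1 / 2| ≤ 1 / 2 := abs_le.2 ⟨by linarith [hf0 y], by linarith [hf1 y]⟩
  nlinarith [abs_nonneg (μ y - ν y)]

lemma tv_le {μ ν : Ω → ℝ} (hs : ∑ y, μ y = ∑ y, ν y) {ε : ℝ}
    (h : ∀ f : Ω → ℝ, (∀ y, 0 ≤ f y) → (∀ y, f y ≤ 1) →
      ∑ y, μ y * f y - ∑ y, ν y * f y ≤ ε) : tvDist μ ν ≤ ε := by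
  have h1 := h (fun y => if ν y ≤ μ y then 1 else 0) (fun y => by split_ifs <;> norm_num)
    (fun y => by split_ifs <;> norm_num)
  refine le_trans (le_of_eq ?_) h1
  have e : ∑ y, |μ y - ν y| = 2 * (∑ y, μ y * (if ν y ≤ μ y then 1 else 0)
      - ∑ y, ν y * (if ν y ≤ μ y then 1 else 0)) - (∑ y, μ y - ∑ y, ν y) := by
    rw [← Finset.sum_sub_distrib, ← Finset.sum_sub_distrib, Finset.mul_sum,
      ← Finset.sum_sub_distrib]
    refine Finset.sum_congr rfl (fun y _ => ?_)
    split_ifs with hy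
    · rw [abs_of_nonneg (by linarith)]; ring
    · rw [abs_of_nonpos (by linarith)]; ring
  rw [tvDist, e, hs]; ring

lemma tv_ge_bdd (μ ν : Ω → ℝ) {f : Ω → ℝ} {C : ℝ} (hf : ∀ y, |f y| ≤ C) :
    |∑ y, μ y * f y - ∑ y, ν y * f y| ≤ 2 * C * tvDist μ ν := by
  rw [← Finset.sum_sub_distrib, tvDist]
  have : 2 * C * ((∑ y, |μ y - ν y|) / 2) = ∑ y, |μ y - ν y| * C := by
    rw [← Finset.sum_mul]; ring
  rw [this]
  refine (Finset.abs_sum_le_sum_abs _ _).trans (Finset.sum_le_sum (fun y _ => ?_))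
  rw [← sub_mul, abs_mul]
  exact mul_le_mul_of_nonneg_left (hf y) (abs_nonneg _)

/-- Row of the heat kernel. -/
noncomputable def Hr (P : Matrix Ω Ω ℝ) (t : ℝ) (x y : Ω) : ℝ := ∑' k, pw t k * (P ^ k) x y

/-- Row of the averaged kernel. -/
noncomputable def Ar (P : Matrix Ω Ω ℝ) (m : ℕ) (x y : Ω) : ℝ :=
  ((P ^ m) x y + (P ^ (m + 1)) x y) / 2

/-- Averaged operator. -/
noncomputable def av (P : Matrix Ω Ω ℝ) (m : ℕ) (f : Ω → ℝ) (x : Ω) : ℝ :=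
  ((P ^ m *ᵥ f) x + (P ^ (m + 1) *ᵥ f) x) / 2

lemma delta_vecMul (M : Matrix Ω Ω ℝ) (x y : Ω) : (deltaMass x ᵥ* M) y = M x y := by
  simp [vecMul, dotProduct, deltaMass]

lemma contDist_eq (P : Matrix Ω Ω ℝ) (pi : Ω → ℝ) (t : ℝ) (x : Ω) :
    contDist P pi t (deltaMass x) = tvDist (Hr P t x) pi := by
  unfold contDist
  congr 1
  funext y
  simp only [delta_vecMul, Hr, pw]

lemma aveDist_eq (P : Matrix Ω Ω ℝ) (pi : Ω → ℝ) (m : ℕ) (x : Ω) :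
    aveDist P pi (m : ℝ) (deltaMass x) = tvDist (Ar P m x) pi := by
  unfold aveDist
  congr 1
  funext y
  simp only [delta_vecMul, Ar, Nat.floor_natCast]

lemma entry_abs_le {M : Matrix Ω Ω ℝ} (hM : IsStochastic M) (x y : Ω) : |M x y| ≤ 1 := by
  rw [abs_of_nonneg (hM.1 x y), ← hM.2 x]
  exact Finset.single_le_sum (fun z _ => hM.1 x z) (Finset.mem_univ y)

lemma Hr_summable {P : Matrix Ω Ω ℝ} (hP : IsStochastic P) {t : ℝ} (ht : 0 ≤ t) (x y : Ω) :
    Summable (fun k => pw t k * (P ^ k) x y) :=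
  pw_summable_bdd ht (fun k => entry_abs_le (stoch_pow hP k) x y)

lemma Hr_apply {P : Matrix Ω Ω ℝ} (hP : IsStochastic P) {t : ℝ} (ht : 0 ≤ t) (x : Ω)
    (f : Ω → ℝ) : ∑ y, Hr P t x y * f y = ∑' k, pw t k * (P ^ k *ᵥ f) x := by
  simp only [Hr]
  have h : ∀ y, (∑' k, pw t k * (P ^ k) x y) * f y = ∑' k, pw t k * (P ^ k) x y * f y :=
    fun y => (tsum_mul_right).symm
  simp only [h]
  rw [← Summable.tsum_finsetSum (fun y _ => (Hr_summable hP ht x y).mul_right (f y))]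
  refine tsum_congr (fun k => ?_)
  simp only [mulVec, dotProduct, Finset.mul_sum, mul_assoc]

lemma Ar_apply (P : Matrix Ω Ω ℝ) (m : ℕ) (x : Ω) (f : Ω → ℝ) :
    ∑ y, Ar P m x y * f y = av P m f x := by
  simp only [Ar, av, mulVec, dotProduct, ← Finset.sum_add_distrib, Finset.sum_div]
  exact Finset.sum_congr rfl (fun y _ => by ring)

lemma Hr_sum {P : Matrix Ω Ω ℝ} (hP : IsStochastic P) {t : ℝ} (ht : 0 ≤ t) (x : Ω) :
    ∑ y, Hr P t x y = 1 := by
  have := Hr_apply hP ht x (fun _ => 1)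
  simp only [stoch_mulVec_const (stoch_pow hP _), mul_one] at this
  rw [this, (pw_hasSum t).tsum_eq]

lemma Ar_sum {P : Matrix Ω Ω ℝ} (hP : IsStochastic P) (m : ℕ) (x : Ω) :
    ∑ y, Ar P m x y = 1 := by
  have := Ar_apply P m x (fun _ => 1)
  simp only [av, stoch_mulVec_const (stoch_pow hP _), mul_one] at this
  rw [this]; norm_num

lemma contMax_le_iff [Nonempty Ω] (P : Matrix Ω Ω ℝ) (pi : Ω → ℝ) (t ε : ℝ) :
    contDistMax P pi t ≤ ε ↔ ∀ x, tvDist (Hr P t x) pi ≤ ε := by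
  unfold contDistMax
  simp only [contDist_eq]
  exact ciSup_le_iff (Set.finite_range _).bddAbove

lemma aveMax_le_iff [Nonempty Ω] (P : Matrix Ω Ω ℝ) (pi : Ω → ℝ) (m : ℕ) (ε : ℝ) :
    aveDistMax P pi m ≤ ε ↔ ∀ x, tvDist (Ar P m x) pi ≤ ε := by
  unfold aveDistMax
  simp only [aveDist_eq]
  exact ciSup_le_iff (Set.finite_range _).bddAbove

lemma av_succ (P : Matrix Ω Ω ℝ) (m : ℕ) (f : Ω → ℝ) (x : Ω) :
    av P (m + 1) f x = (P *ᵥ (av P m f)) x := by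
  have : av P m f = (2 : ℝ)⁻¹ • (P ^ m *ᵥ f + P ^ (m + 1) *ᵥ f) := by
    funext z; simp [av]; ring
  rw [this, Matrix.mulVec_smul, Matrix.mulVec_add, ← pow_succ_mulVec, ← pow_succ_mulVec]
  simp [av]; ring

lemma av_mem {P : Matrix Ω Ω ℝ} (hP : IsStochastic P) (m : ℕ) {f : Ω → ℝ}
    (hf0 : ∀ y, 0 ≤ f y) (hf1 : ∀ y, f y ≤ 1) (x : Ω) : 0 ≤ av P m f x ∧ av P m f x ≤ 1 := by
  have h1 := stoch_mulVec_nonneg (stoch_pow hP m) hf0 x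
  have h2 := stoch_mulVec_nonneg (stoch_pow hP (m + 1)) hf0 x
  have h3 := stoch_mulVec_le (stoch_pow hP m) hf1 x
  have h4 := stoch_mulVec_le (stoch_pow hP (m + 1)) hf1 x
  unfold av
  constructor <;> linarith

lemma pi_mem {pi : Ω → ℝ} (hp : IsProbVec pi) {f : Ω → ℝ}
    (hf0 : ∀ y, 0 ≤ f y) (hf1 : ∀ y, f y ≤ 1) : 0 ≤ ∑ y, pi y * f y ∧ ∑ y, pi y * f y ≤ 1 := by
  refine ⟨Finset.sum_nonneg (fun y _ => mul_nonneg (hp.1 y) (hf0 y)), ?_⟩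
  rw [← hp.2]
  exact Finset.sum_le_sum (fun y _ => mul_le_of_le_one_right (hp.1 y) (hf1 y))

/-- Centered averaged function at a later time is bounded by the bound at an earlier time. -/
lemma av_mono {P : Matrix Ω Ω ℝ} (hP : IsStochastic P) (m j : ℕ) (f : Ω → ℝ) (c ε : ℝ)
    (h : ∀ x, |av P m f x - c| ≤ ε) (x : Ω) : |av P (m + j) f x - c| ≤ ε := by
  induction j generalizing x with
  | zero => exact h x
  | succ j ih =>
    rw [← add_assoc, av_succ]
    have e : (P *ᵥ av P (m + j) f) x - c = (P *ᵥ (fun y => av P (m + j) f y - c)) x := by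
      have : (fun y => av P (m + j) f y - c) = av P (m + j) f - fun _ => c := rfl
      rw [this, Matrix.mulVec_sub, Pi.sub_apply, stoch_mulVec_const hP]
    rw [e]
    exact stoch_mulVec_abs_le hP ih x

end basics

section ineqOne

variable {Ω : Type*} [Fintype Ω] [DecidableEq Ω]

lemma pw_shift {s : ℝ} (hs : 0 < s) {b : ℕ → ℝ} {C : ℝ} (hb : ∀ k, |b k| ≤ C) :
    HasSum (fun k : ℕ => pw s k * ((k : ℝ) / s * b k)) (∑' k, pw s k * b (k + 1)) := by
  rw [← hasSum_nat_add_iff' 1]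
  simp only [Finset.range_one, Finset.sum_singleton, Nat.cast_zero, zero_div, zero_mul, mul_zero,
    sub_zero]
  have h := (pw_summable_bdd hs.le (u := fun k => b (k + 1)) (fun k => hb (k + 1))).hasSum
  refine hs_congr h (fun k => ?_) rfl
  have := pw_succ s k
  have h2 : pw s k = (k + 1 : ℝ) * pw s (k + 1) / s := by rw [this]; field_simp
  rw [h2]; push_cast; ring

lemma ineq1 {P : Matrix Ω Ω ℝ} {pi : Ω → ℝ} (hP : IsStochastic P) (hp : IsProbVec pi)
    {s η ε : ℝ} {m : ℕ} (hms : (m : ℝ) < s) (hη : 0 < η) (hε : 0 ≤ ε)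
    (h : ∀ x, tvDist (Ar P m x) pi ≤ ε) (x : Ω) :
    tvDist (Hr P s x) pi ≤ ε + s / (s - m) ^ 2 + (η + 1 / (η * s)) := by
  have hs : 0 < s := lt_of_le_of_lt (Nat.cast_nonneg m) hms
  refine tv_le (by rw [Hr_sum hP hs.le, hp.2]) (fun f hf0 hf1 => ?_)
  rw [Hr_apply hP hs.le]
  set c := ∑ y, pi y * f y with hc
  obtain ⟨hc0, hc1⟩ := pi_mem hp hf0 hf1
  rw [← hc] at hc0 hc1
  set b : ℕ → ℝ := fun k => (P ^ k *ᵥ f) x with hb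
  have hb0 : ∀ k, 0 ≤ b k := fun k => stoch_mulVec_nonneg (stoch_pow hP k) hf0 x
  have hb1 : ∀ k, b k ≤ 1 := fun k => stoch_mulVec_le (stoch_pow hP k) hf1 x
  have hbb : ∀ k, |b k| ≤ 1 := fun k => abs_le.2 ⟨by linarith [hb0 k], hb1 k⟩
  have hav : ∀ k, av P k f x = (b k + b (k + 1)) / 2 := fun k => rfl
  have S1 := pw_summable_bdd hs.le hbb
  have S2 := pw_summable_bdd hs.le (u := fun k => b (k + 1)) (fun k => hbb (k + 1))
  have S3 := pw_shift hs hbb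
  -- first part
  have hA : ∑' k, pw s k * (av P k f x - c) ≤ ε + 1 / (s - m) ^ 2 * s := by
    have hb2 : ∀ k, |av P k f x - c| ≤ 1 := by
      intro k
      have := av_mem hP k hf0 hf1 x
      exact abs_le.2 ⟨by linarith, by linarith⟩
    refine pw_tsum_le hs.le (pw_summable_bdd hs.le hb2) _ _ (fun k => ?_)
    by_cases hk : m ≤ k
    · obtain ⟨j, rfl⟩ := Nat.exists_eq_add_of_le hk
      have h1 : ∀ z, |av P m f z - c| ≤ ε := by
        intro z
        have := tv_ge (μ := Ar P m z) (ν := pi) (by rw [Ar_sum hP, hp.2]) hf0 hf1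
        rw [Ar_apply] at this
        exact this.trans (h z)
      have h2 := (abs_le.1 (av_mono hP m j f c ε h1 x)).2
      have h3 : 0 ≤ 1 / (s - m) ^ 2 * (((m + j : ℕ) : ℝ) - s) ^ 2 := by positivity
      linarith
    · push Not at hk
      have hk' : (k : ℝ) < m := by exact_mod_cast hk
      have h2 : 1 ≤ 1 / (s - m) ^ 2 * ((k : ℝ) - s) ^ 2 := by
        rw [one_div, inv_mul_eq_div, le_div_iff₀ (by have : 0 < s - m := by linarith
                                                     positivity)]
        nlinarith
      linarith [(abs_le.1 (hb2 k)).2]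
  have eA : ∑' k, pw s k * (av P k f x - c)
      = (∑' k, pw s k * b k + ∑' k, pw s k * b (k + 1)) / 2 - c := by
    have := ((S1.hasSum.add S2.hasSum).div_const 2).sub ((pw_hasSum s).mul_right c)
    rw [one_mul] at this
    rw [← this.tsum_eq]
    exact tsum_congr (fun k => by rw [hav]; ring)
  have S4 := S1.hasSum.sub S3
  have hB : ∑' k, pw s k * ((1 - (k : ℝ) / s) * b k) ≤ η + 1 / (η * s ^ 2) * s := by
    refine pw_tsum_le hs.le ?_ _ _ (fun k => ?_)
    · refine S4.summable.congr (fun k => ?_)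
      ring
    · have h1 : (1 - (k : ℝ) / s) * b k ≤ |1 - (k : ℝ) / s| := by
        calc (1 - (k : ℝ) / s) * b k ≤ |1 - (k : ℝ) / s| * b k :=
              mul_le_mul_of_nonneg_right (le_abs_self _) (hb0 k)
          _ ≤ _ := mul_le_of_le_one_right (abs_nonneg _) (hb1 k)
      have h2 : 1 / (η * s ^ 2) * ((k : ℝ) - s) ^ 2 = |1 - (k : ℝ) / s| ^ 2 / η := by
        rw [sq_abs]; field_simp; ring
      rw [h2]
      refine h1.trans ?_
      set u := |1 - (k : ℝ) / s|
      have h3 : η + u ^ 2 / η - u = ((η - u) ^ 2 + u * η) / η := by field_simp; ring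
      have h4 : 0 ≤ ((η - u) ^ 2 + u * η) / η := by
        have : 0 ≤ u := abs_nonneg _
        positivity
      linarith
  have eB : ∑' k, pw s k * ((1 - (k : ℝ) / s) * b k)
      = ∑' k, pw s k * b k - ∑' k, pw s k * b (k + 1) := by
    rw [← S4.tsum_eq]
    exact tsum_congr (fun k => by ring)
  rw [eA] at hA
  rw [eB] at hB
  have e1 : 1 / (s - m) ^ 2 * s = s / (s - m) ^ 2 := by ring
  have e2 : 1 / (η * s ^ 2) * s = 1 / (η * s) := by field_simp
  rw [e1] at hA
  rw [e2] at hB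
  have : 0 < η + 1 / (η * s) := by positivity
  linarith

end ineqOne

section spectral

variable {Ω : Type*} [Fintype Ω] [DecidableEq Ω]

lemma spectral_exists {Q : Matrix Ω Ω ℝ} {pi : Ω → ℝ} (hpos : ∀ x, 0 < pi x)
    (hrev : ∀ x y, pi x * Q x y = pi y * Q y x) :
    ∃ (l : Ω → ℝ) (g : Ω → Ω → ℝ), (∀ i, Q *ᵥ g i = l i • g i) ∧
      (∀ i j, ∑ y, pi y * (g i y * g j y) = if i = j then 1 else 0) ∧
      ∀ f : Ω → ℝ, ∃ α : Ω → ℝ, ∀ y, f y = ∑ i, α i * g i y := by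
  have hsq : ∀ x, 0 < √(pi x) := fun x => Real.sqrt_pos.2 (hpos x)
  have hss : ∀ x, √(pi x) * √(pi x) = pi x := fun x => Real.mul_self_sqrt (hpos x).le
  set S : Matrix Ω Ω ℝ := Matrix.of (fun x y => √(pi x) * Q x y / √(pi y)) with hSdef
  have hS : S.IsHermitian := by
    ext x y
    simp only [hSdef, conjTranspose_apply, of_apply, star_trivial]
    rw [div_eq_div_iff (hsq x).ne' (hsq y).ne']
    have := hrev x y
    have h1 := hss x
    have h2 := hss y
    linear_combination Q y x * h2 - Q x y * h1 - this
  set b := hS.eigenvectorBasis with hb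
  refine ⟨hS.eigenvalues, fun i y => b i y / √(pi y), fun i => ?_, fun i j => ?_, fun f => ?_⟩
  · have h := hS.mulVec_eigenvectorBasis i
    funext x
    have hx := congrFun h x
    simp only [mulVec, dotProduct, hSdef, of_apply, Pi.smul_apply, smul_eq_mul] at hx ⊢
    rw [← hb] at hx
    have : hS.eigenvalues i * (b i x / √(pi x)) = (hS.eigenvalues i * b i x) / √(pi x) := by ring
    rw [this, ← hx, Finset.sum_div]
    refine Finset.sum_congr rfl (fun y _ => ?_)
    have := (hsq x).ne'
    have := (hsq y).ne'
    field_simp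
  · have h := (orthonormal_iff_ite.1 b.orthonormal) i j
    rw [← h, PiLp.inner_apply]
    refine Finset.sum_congr rfl (fun y _ => ?_)
    have := (hsq y).ne'
    simp only [inner, conj_trivial]
    nth_rewrite 1 [← hss y]
    simp
    field_simp
  · set v : EuclideanSpace ℝ Ω := WithLp.toLp 2 (fun y => √(pi y) * f y) with hv
    refine ⟨fun i => b.repr v i, fun y => ?_⟩
    have h := b.sum_repr v
    have hy := congrArg (fun u : EuclideanSpace ℝ Ω => u y) h
    simp only [hv] at hy
    simp at hy
    have := (hsq y).ne'
    have e : f y = (√(pi y) * f y) / √(pi y) := by field_simp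
    rw [e, ← hy, Finset.sum_div]
    exact Finset.sum_congr rfl (fun i _ => by simp [hv]; ring)

lemma parseval {pi : Ω → ℝ} {g : Ω → Ω → ℝ}
    (hg : ∀ i j, ∑ y, pi y * (g i y * g j y) = if i = j then 1 else 0) (β : Ω → ℝ) :
    ∑ y, pi y * (∑ i, β i * g i y) ^ 2 = ∑ i, β i ^ 2 := by
  have h1 : ∀ y, pi y * (∑ i, β i * g i y) ^ 2
      = ∑ i, ∑ j, β i * β j * (pi y * (g i y * g j y)) := by
    intro y
    rw [sq, Finset.sum_mul_sum, Finset.mul_sum]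
    refine Finset.sum_congr rfl (fun i _ => ?_)
    rw [Finset.mul_sum]
    exact Finset.sum_congr rfl (fun j _ => by ring)
  simp only [h1]
  rw [Finset.sum_comm]
  refine Finset.sum_congr rfl (fun i _ => ?_)
  rw [Finset.sum_comm]
  simp only [← Finset.mul_sum, hg]
  simp [sq]

/-- Centered transition matrix. -/
def cen (P : Matrix Ω Ω ℝ) (pi : Ω → ℝ) : Matrix Ω Ω ℝ := Matrix.of (fun x y => P x y - pi y)

lemma cen_mulVec (P : Matrix Ω Ω ℝ) (pi : Ω → ℝ) (f : Ω → ℝ) (x : Ω) :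
    (cen P pi *ᵥ f) x = (P *ᵥ f) x - ∑ y, pi y * f y := by
  simp only [cen, mulVec, dotProduct, of_apply, sub_mul, Finset.sum_sub_distrib]

lemma pi_mulVec {P : Matrix Ω Ω ℝ} {pi : Ω → ℝ} (h : pi ᵥ* P = pi) (f : Ω → ℝ) :
    ∑ y, pi y * (P *ᵥ f) y = ∑ y, pi y * f y := by
  have := Matrix.dotProduct_mulVec pi P f
  rw [h] at this
  exact this

lemma cen_pow {P : Matrix Ω Ω ℝ} {pi : Ω → ℝ} (hP : IsStochastic P) (hp : IsProbVec pi)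
    (h : pi ᵥ* P = pi) (f : Ω → ℝ) (m : ℕ) (x : Ω) :
    (cen P pi ^ (m + 1) *ᵥ f) x = (P ^ (m + 1) *ᵥ f) x - ∑ y, pi y * f y := by
  induction m generalizing x with
  | zero => rw [zero_add, pow_one, pow_one, cen_mulVec]
  | succ m ih =>
    rw [pow_succ_mulVec, cen_mulVec, pow_succ_mulVec P (m + 1)]
    have e : cen P pi ^ (m + 1) *ᵥ f = P ^ (m + 1) *ᵥ f - fun _ => ∑ y, pi y * f y := by
      funext z; rw [ih z]; rfl
    have e2 : ∑ y, pi y * (cen P pi ^ (m + 1) *ᵥ f) y = 0 := by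
      simp only [ih, mul_sub, Finset.sum_sub_distrib]
      rw [pi_mulVec (pi_pow h (m + 1)), ← Finset.sum_mul, hp.2, one_mul, sub_self]
    rw [e2, e, Matrix.mulVec_sub, Pi.sub_apply, stoch_mulVec_const hP, sub_zero]

lemma gap {P : Matrix Ω Ω ℝ} {pi : Ω → ℝ} (hP : IsStochastic P) (hp : IsProbVec pi)
    (h : pi ᵥ* P = pi) {t L : ℝ} (ht : 0 ≤ t) (hL : 0 < L)
    (hd : ∀ x, tvDist (Hr P t x) pi ≤ Real.exp (-L) / 2) {l : ℝ} {g : Ω → ℝ} (hg0 : g ≠ 0)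
    (hg : cen P pi *ᵥ g = l • g) : -1 ≤ l ∧ 1 ≤ (t / L + 1) * (1 - l) := by
  by_cases hl : l = 0
  · subst hl
    refine ⟨by norm_num, ?_⟩
    have : 0 ≤ t / L := by positivity
    linarith
  have hpt : ∀ x, (P *ᵥ g) x - ∑ y, pi y * g y = l * g x := fun x => by
    rw [← cen_mulVec, hg]; rfl
  have hz : ∑ y, pi y * g y = 0 := by
    have h1 : ∑ x, pi x * ((P *ᵥ g) x - ∑ y, pi y * g y) = 0 := by
      simp only [mul_sub, Finset.sum_sub_distrib]
      rw [pi_mulVec h, ← Finset.sum_mul, hp.2, one_mul, sub_self]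
    simp only [hpt] at h1
    have h2 : l * ∑ y, pi y * g y = 0 := by
      rw [← h1, Finset.mul_sum]; exact Finset.sum_congr rfl (fun y _ => by ring)
    exact (mul_eq_zero.1 h2).resolve_left hl
  have hPg : P *ᵥ g = l • g := by
    funext x
    have := hpt x
    rw [hz, sub_zero] at this
    exact this
  have hPk : ∀ k, P ^ k *ᵥ g = l ^ k • g := by
    intro k
    induction k with
    | zero => simp
    | succ k ih =>
      rw [pow_succ_mulVec, ih, Matrix.mulVec_smul, hPg, smul_smul, pow_succ]
  obtain ⟨x0, hx0⟩ := Function.ne_iff.1 hg0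
  obtain ⟨x, -, hx⟩ := Finset.exists_max_image Finset.univ (fun y => |g y|) ⟨x0, Finset.mem_univ _⟩
  have hx' : ∀ y, |g y| ≤ |g x| := fun y => hx y (Finset.mem_univ _)
  have hC : 0 < |g x| := lt_of_lt_of_le (abs_pos.2 hx0) (hx' x0)
  have hl1 : |l| ≤ 1 := by
    have h1 := stoch_mulVec_abs_le hP hx' x
    rw [hPg, Pi.smul_apply, smul_eq_mul, abs_mul] at h1
    exact le_of_mul_le_mul_right (by linarith) hC
  have hH := tv_ge_bdd (Hr P t x) pi hx'
  rw [Hr_apply hP ht, hz, sub_zero] at hH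
  have e : ∑' k, pw t k * (P ^ k *ᵥ g) x = Real.exp (-(t * (1 - l))) * g x := by
    rw [← ((pw_gen t l).mul_right (g x)).tsum_eq]
    exact tsum_congr (fun k => by rw [hPk]; simp [mul_assoc])
  rw [e, abs_mul, abs_of_pos (Real.exp_pos _)] at hH
  have h3 : Real.exp (-(t * (1 - l))) ≤ Real.exp (-L) := by
    refine le_of_mul_le_mul_right ?_ hC
    nlinarith [hd x]
  have h4 := Real.exp_le_exp.1 h3
  have hb := abs_le.1 hl1
  refine ⟨hb.1, ?_⟩
  have h5 : 1 ≤ t * (1 - l) / L := by rw [le_div_iff₀ hL]; linarith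
  have h6 : (t / L + 1) * (1 - l) = t * (1 - l) / L + (1 - l) := by ring
  rw [h6]; linarith

end spectral

section ineqTwo

variable {Ω : Type*} [Fintype Ω] [DecidableEq Ω]

lemma eigen_pow {Q : Matrix Ω Ω ℝ} {l : Ω → ℝ} {g : Ω → Ω → ℝ}
    (hg : ∀ i, Q *ᵥ g i = l i • g i) {f : Ω → ℝ} {α : Ω → ℝ}
    (hf : ∀ y, f y = ∑ i, α i * g i y) (k : ℕ) (y : Ω) :
    (Q ^ k *ᵥ f) y = ∑ i, α i * l i ^ k * g i y := by
  have hfe : f = ∑ i, α i • g i := by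
    funext z; rw [hf z]; simp
  have hk : ∀ i, Q ^ k *ᵥ g i = l i ^ k • g i := by
    intro i
    induction k with
    | zero => simp
    | succ k ih => rw [pow_succ_mulVec, ih, Matrix.mulVec_smul, hg, smul_smul, pow_succ]
  rw [hfe, Matrix.mulVec_sum]
  simp only [Matrix.mulVec_smul, hk]
  simp [mul_assoc]

/-- The maximal inequality. -/
lemma maximal {P : Matrix Ω Ω ℝ} {pi : Ω → ℝ} (hM : IsRevMC P pi) {t L : ℝ} (ht : 0 ≤ t)
    (hL : 0 < L) (hd : ∀ x, tvDist (Hr P t x) pi ≤ Real.exp (-L) / 2) {f : Ω → ℝ}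
    (hf0 : ∀ y, 0 ≤ f y) (hf1 : ∀ y, f y ≤ 1) {w : ℕ} (hw : 1 ≤ w) (N : ℕ) :
    ∑ y, pi y * ((av P (w + N) f y - ∑ z, pi z * f z) ^ 2
      + ∑ i ∈ Finset.range N, ((t / L + 1) / 2 *
          ((av P (w + i) f y - ∑ z, pi z * f z) - (av P (w + i + 1) f y - ∑ z, pi z * f z)) ^ 2
        + 1 / (2 * (t / L + 1)) *
          ((av P (w + i) f y - ∑ z, pi z * f z) + (av P (w + i + 1) f y - ∑ z, pi z * f z)) ^ 2))
      ≤ 2 * (t / L + 1) / w := by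
  obtain ⟨hMC, hrev⟩ := hM
  have hpos := pi_pos hMC
  obtain ⟨hP, -, hp, hst⟩ := hMC
  have hrevc : ∀ x y, pi x * cen P pi x y = pi y * cen P pi y x := by
    intro x y
    simp only [cen, of_apply]
    have := hrev x y
    linear_combination this
  obtain ⟨l, g, hg, hort, hexp⟩ := spectral_exists hpos hrevc
  obtain ⟨α, hα⟩ := hexp f
  set r := t / L + 1 with hr
  have hr1 : 1 ≤ r := by
    have : 0 ≤ t / L := by positivity
    linarith
  have hgne : ∀ i, g i ≠ 0 := by
    intro i h0
    have := hort i i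
    rw [h0] at this
    simp at this
  have hgap := fun i => gap hP hp hst ht hL hd (hgne i) (hg i)
  set c := ∑ z, pi z * f z with hc
  have ha : ∀ m, 1 ≤ m → ∀ y, av P m f y - c
      = ∑ i, (α i * ((1 + l i) / 2 * l i ^ m)) * g i y := by
    intro m hm y
    obtain ⟨j, rfl⟩ := Nat.exists_eq_add_of_le' hm
    have h1 := cen_pow hP hp hst f j y
    have h2 := cen_pow hP hp hst f (j + 1) y
    rw [eigen_pow hg hα] at h1 h2
    have : av P (j + 1) f y - c = ((∑ i, α i * l i ^ (j + 1) * g i y)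
        + ∑ i, α i * l i ^ (j + 1 + 1) * g i y) / 2 := by
      rw [h1, h2, av]; ring
    rw [this, ← Finset.sum_add_distrib, Finset.sum_div]
    exact Finset.sum_congr rfl (fun i _ => by ring)
  have ha0 : ∀ m, 1 ≤ m → ∑ y, pi y * (av P m f y - c) ^ 2
      = ∑ i, α i ^ 2 * (((1 + l i) / 2) ^ 2 * l i ^ (2 * m)) := by
    intro m hm
    simp only [ha m hm]
    rw [parseval hort]
    exact Finset.sum_congr rfl (fun i _ => by ring)
  have ha1 : ∀ m, 1 ≤ m → ∑ y, pi y * ((av P m f y - c) - (av P (m + 1) f y - c)) ^ 2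
      = ∑ i, α i ^ 2 * (((1 + l i) / 2) ^ 2 * (l i ^ (2 * m) * (1 - l i) ^ 2)) := by
    intro m hm
    simp only [ha m hm, ha (m + 1) (by omega), ← Finset.sum_sub_distrib, ← sub_mul]
    rw [parseval hort]
    exact Finset.sum_congr rfl (fun i _ => by ring)
  have ha2 : ∀ m, 1 ≤ m → ∑ y, pi y * ((av P m f y - c) + (av P (m + 1) f y - c)) ^ 2
      = ∑ i, α i ^ 2 * (((1 + l i) / 2) ^ 2 * (l i ^ (2 * m) * (1 + l i) ^ 2)) := by
    intro m hm
    simp only [ha m hm, ha (m + 1) (by omega), ← Finset.sum_add_distrib, ← add_mul]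
    rw [parseval hort]
    exact Finset.sum_congr rfl (fun i _ => by ring)
  have hα2 : ∑ i, α i ^ 2 ≤ 1 := by
    rw [← parseval hort α]
    simp only [← hα]
    rw [← hp.2]
    refine Finset.sum_le_sum (fun y _ => mul_le_of_le_one_right (hp.1 y) ?_)
    exact pow_le_one₀ (hf0 y) (hf1 y)
  have hsplit : ∑ y, pi y * ((av P (w + N) f y - c) ^ 2
      + ∑ i ∈ Finset.range N, (r / 2 *
          ((av P (w + i) f y - c) - (av P (w + i + 1) f y - c)) ^ 2
        + 1 / (2 * r) * ((av P (w + i) f y - c) + (av P (w + i + 1) f y - c)) ^ 2))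
      = ∑ y, pi y * (av P (w + N) f y - c) ^ 2 + ∑ i ∈ Finset.range N,
        (r / 2 * ∑ y, pi y * ((av P (w + i) f y - c) - (av P (w + i + 1) f y - c)) ^ 2
        + 1 / (2 * r) * ∑ y, pi y * ((av P (w + i) f y - c) + (av P (w + i + 1) f y - c)) ^ 2) := by
    simp only [mul_add, Finset.sum_add_distrib, Finset.mul_sum]
    congr 2
    · rw [Finset.sum_comm]
      exact Finset.sum_congr rfl (fun i _ => Finset.sum_congr rfl (fun y _ => by ring))
    · rw [Finset.sum_comm]
      exact Finset.sum_congr rfl (fun i _ => Finset.sum_congr rfl (fun y _ => by ring))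
  rw [hsplit, ha0 _ (by omega)]
  have hrew : ∑ i ∈ Finset.range N,
        (r / 2 * ∑ y, pi y * ((av P (w + i) f y - c) - (av P (w + i + 1) f y - c)) ^ 2
        + 1 / (2 * r) * ∑ y, pi y * ((av P (w + i) f y - c) + (av P (w + i + 1) f y - c)) ^ 2)
      = ∑ j, α j ^ 2 * (((1 + l j) / 2) ^ 2 * ∑ i ∈ Finset.range N, l j ^ (2 * (w + i)) *
        (r / 2 * (1 - l j) ^ 2 + 1 / (2 * r) * (1 + l j) ^ 2)) := by
    simp only [Finset.mul_sum]
    rw [Finset.sum_comm]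
    refine Finset.sum_congr rfl (fun i _ => ?_)
    simp only [← Finset.mul_sum]
    rw [ha1 _ (by omega), ha2 _ (by omega), Finset.mul_sum, Finset.mul_sum,
      ← Finset.sum_add_distrib]
    exact Finset.sum_congr rfl (fun j _ => by ring)
  rw [hrew, ← Finset.sum_add_distrib]
  have hB : 0 ≤ 2 * r / w := by positivity
  calc _ ≤ ∑ j, α j ^ 2 * (2 * r / w) := by
        refine Finset.sum_le_sum (fun j _ => ?_)
        rw [← mul_add, ← mul_add]
        exact mul_le_mul_of_nonneg_left
          (scalar_bound (hgap j).1 (hgap j).2 hr1 hw N) (sq_nonneg _)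
    _ = (∑ j, α j ^ 2) * (2 * r / w) := by rw [Finset.sum_mul]
    _ ≤ 1 * (2 * r / w) := mul_le_mul_of_nonneg_right hα2 hB
    _ = _ := one_mul _

/-- Probability of avoiding the good set (with bad indicator `B`) up to time `j`. -/
noncomputable def avoid (P : Matrix Ω Ω ℝ) (B : Ω → ℝ) : ℕ → Ω → ℝ
  | 0 => B
  | j + 1 => fun x => B x * (P *ᵥ avoid P B j) x

lemma avoid_mem {P : Matrix Ω Ω ℝ} (hP : IsStochastic P) {B : Ω → ℝ} (h0 : ∀ y, 0 ≤ B y)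
    (h1 : ∀ y, B y ≤ 1) (j : ℕ) (x : Ω) : 0 ≤ avoid P B j x ∧ avoid P B j x ≤ 1 := by
  induction j generalizing x with
  | zero => exact ⟨h0 x, h1 x⟩
  | succ j ih =>
    have a := stoch_mulVec_nonneg hP (fun y => (ih y).1) x
    have b := stoch_mulVec_le hP (fun y => (ih y).2) x
    exact ⟨mul_nonneg (h0 x) a, mul_le_one₀ (h1 x) a b⟩

lemma avoid_anti {P : Matrix Ω Ω ℝ} (hP : IsStochastic P) {B : Ω → ℝ} (h0 : ∀ y, 0 ≤ B y)
    (h1 : ∀ y, B y ≤ 1) (j : ℕ) (x : Ω) : avoid P B (j + 1) x ≤ avoid P B j x := by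
  induction j generalizing x with
  | zero =>
    exact mul_le_of_le_one_right (h0 x) (stoch_mulVec_le hP (fun y => h1 y) x)
  | succ j ih =>
    exact mul_le_mul_of_nonneg_left (stoch_mulVec_mono hP ih x) (h0 x)

lemma avoid_le_pow {P : Matrix Ω Ω ℝ} (hP : IsStochastic P) {B : Ω → ℝ} (h0 : ∀ y, 0 ≤ B y)
    (h1 : ∀ y, B y ≤ 1) {i j : ℕ} (hij : i ≤ j) (x : Ω) : avoid P B j x ≤ (P ^ i *ᵥ B) x := by
  have hanti : avoid P B j x ≤ avoid P B i x :=
    antitone_nat_of_succ_le (f := fun j => avoid P B j x)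
      (fun j => avoid_anti hP h0 h1 j x) hij
  refine hanti.trans ?_
  clear hanti hij
  induction i generalizing x with
  | zero => simp [avoid]
  | succ i ih =>
    rw [pow_succ_mulVec]
    calc avoid P B (i + 1) x ≤ (P *ᵥ avoid P B i) x :=
          mul_le_of_le_one_left
            (stoch_mulVec_nonneg hP (fun y => (avoid_mem hP h0 h1 i y).1) x) (h1 x)
      _ ≤ _ := stoch_mulVec_mono hP ih x

lemma avoid_le {P : Matrix Ω Ω ℝ} {pi : Ω → ℝ} (hP : IsStochastic P) (hp : IsProbVec pi)
    {B : Ω → ℝ} (h0 : ∀ y, 0 ≤ B y)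
    (h1 : ∀ y, B y ≤ 1) {t ε : ℝ} (ht : 0 ≤ t) (hd : ∀ x, tvDist (Hr P t x) pi ≤ ε) {n : ℕ}
    (hn : t < n) (x : Ω) :
    avoid P B n x ≤ ε + ∑ y, pi y * B y + t / (n - t) ^ 2 := by
  have h2 := (abs_le.1 (tv_ge (μ := Hr P t x) (ν := pi) (by rw [Hr_sum hP ht, hp.2]) h0 h1)).2
  rw [Hr_apply hP ht] at h2
  have hb : ∀ k, |(P ^ k *ᵥ B) x| ≤ 1 := fun k =>
    abs_le.2 ⟨by linarith [stoch_mulVec_nonneg (stoch_pow hP k) h0 x],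
      stoch_mulVec_le (stoch_pow hP k) h1 x⟩
  have S1 := pw_summable_bdd ht hb
  have S2 := ((pw_hasSum t).mul_right (avoid P B n x)).sub S1.hasSum
  have hle : ∑' k, pw t k * (avoid P B n x - (P ^ k *ᵥ B) x) ≤ 0 + 1 / (n - t) ^ 2 * t := by
    refine pw_tsum_le ht (S2.summable.congr (fun k => by ring)) _ _ (fun k => ?_)
    by_cases hk : k ≤ n
    · have := avoid_le_pow hP h0 h1 hk x
      have h3 : 0 ≤ 1 / (n - t) ^ 2 * ((k : ℝ) - t) ^ 2 := by positivity
      linarith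
    · push Not at hk
      have hk' : (n : ℝ) < k := by exact_mod_cast hk
      have h3 : 1 ≤ 1 / (n - t) ^ 2 * ((k : ℝ) - t) ^ 2 := by
        have : 0 < n - t := by linarith
        rw [one_div, inv_mul_eq_div, le_div_iff₀ (by positivity)]
        nlinarith
      have := (avoid_mem hP h0 h1 n x).2
      have := stoch_mulVec_nonneg (stoch_pow hP k) h0 x
      linarith
  have e : ∑' k, pw t k * (avoid P B n x - (P ^ k *ᵥ B) x)
      = avoid P B n x - ∑' k, pw t k * (P ^ k *ᵥ B) x := by
    rw [one_mul] at S2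
    rw [← S2.tsum_eq]
    exact tsum_congr (fun k => by ring)
  rw [e] at hle
  have e1 : 1 / (n - t) ^ 2 * t = t / (n - t) ^ 2 := by ring
  rw [e1] at hle
  linarith [hd x]

lemma av_le_avoid {P : Matrix Ω Ω ℝ} (hP : IsStochastic P) {B : Ω → ℝ}
    (hB : ∀ y, B y = 0 ∨ B y = 1) (f : Ω → ℝ) (c η : ℝ) (hη : 0 ≤ η) (w n : ℕ)
    (h1 : ∀ m y, |av P m f y - c| ≤ 1)
    (hG : ∀ y, B y = 0 → ∀ m, w ≤ m → m ≤ w + n → |av P m f y - c| ≤ η)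
    (j : ℕ) (m : ℕ) (hm1 : w + j ≤ m) (hm2 : m ≤ w + n) (x : Ω) :
    |av P m f x - c| ≤ avoid P B j x + η := by
  have h0 : ∀ y, 0 ≤ B y := fun y => by rcases hB y with h | h <;> rw [h]; norm_num
  have hle1 : ∀ y, B y ≤ 1 := fun y => by rcases hB y with h | h <;> rw [h]; norm_num
  induction j generalizing m x with
  | zero =>
    rcases hB x with h | h
    · have := hG x h m (by omega) hm2
      simpa [avoid, h] using this
    · have := h1 m x
      simp only [avoid, h]; linarith
  | succ j ih =>
    rcases hB x with h | h
    · have := hG x h m (by omega) hm2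
      simpa [avoid, h] using this
    · obtain ⟨q, rfl⟩ : ∃ q, m = q + 1 := ⟨m - 1, by omega⟩
      have ih' := fun y => ih q (by omega) (by omega) y
      simp only [avoid, h, one_mul]
      rw [av_succ]
      have u1 := stoch_mulVec_mono hP (f := av P q f) (g := avoid P B j + fun _ => (c + η))
        (fun y => by
          have := (abs_le.1 (ih' y)).2
          simp only [Pi.add_apply]; linarith) x
      have u2 := stoch_mulVec_mono hP (f := (fun _ => (c - η)) - avoid P B j) (g := av P q f)
        (fun y => by
          have := (abs_le.1 (ih' y)).1
          simp only [Pi.sub_apply]; linarith) x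
      rw [Matrix.mulVec_add, Pi.add_apply, stoch_mulVec_const hP] at u1
      rw [Matrix.mulVec_sub, Pi.sub_apply, stoch_mulVec_const hP] at u2
      exact abs_le.2 ⟨by linarith, by linarith⟩

lemma ineq2 {P : Matrix Ω Ω ℝ} {pi : Ω → ℝ} (hM : IsRevMC P pi) {t ε t0 L η : ℝ}
    (ht : 0 ≤ t) (hd : ∀ x, tvDist (Hr P t x) pi ≤ ε)
    (ht0 : 0 ≤ t0) (hL : 0 < L) (hd0 : ∀ x, tvDist (Hr P t0 x) pi ≤ Real.exp (-L) / 2)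
    {n w : ℕ} (hn : t < n) (hw : 1 ≤ w) (hη : 0 < η) (x : Ω) :
    tvDist (Ar P (w + n) x) pi ≤
      ε + 2 * (t0 / L + 1) / w / η ^ 2 + t / (n - t) ^ 2 + η := by
  classical
  have hP := hM.1.1
  have hp := hM.1.2.2.1
  refine tv_le (by rw [Ar_sum hP, hp.2]) (fun f hf0 hf1 => ?_)
  rw [Ar_apply]
  have hmax := maximal hM ht0 hL hd0 hf0 hf1 hw n
  obtain ⟨hc0, hc1⟩ := pi_mem hp hf0 hf1
  set c := ∑ y, pi y * f y with hc
  set r := t0 / L + 1 with hr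
  have hrp : 0 < r := by
    have : 0 ≤ t0 / L := by positivity
    linarith
  set B : Ω → ℝ := fun y => if ∀ m, w ≤ m → m ≤ w + n → |av P m f y - c| ≤ η then 0 else 1 with hBdef
  have hB : ∀ y, B y = 0 ∨ B y = 1 := fun y => by
    simp only [hBdef]; split_ifs <;> simp
  have h0 : ∀ y, 0 ≤ B y := fun y => by rcases hB y with h | h <;> rw [h]; norm_num
  have hle1 : ∀ y, B y ≤ 1 := fun y => by rcases hB y with h | h <;> rw [h]; norm_num
  have hG : ∀ y, B y = 0 → ∀ m, w ≤ m → m ≤ w + n → |av P m f y - c| ≤ η := by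
    intro y hy
    by_contra hcon
    simp only [hBdef] at hy
    rw [if_neg hcon] at hy
    norm_num at hy
  have hpiB : ∑ y, pi y * B y ≤ 2 * r / w / η ^ 2 := by
    rw [le_div_iff₀ (by positivity), Finset.sum_mul]
    refine le_trans (Finset.sum_le_sum (fun y _ => ?_)) hmax
    rw [mul_assoc]
    refine mul_le_mul_of_nonneg_left ?_ (hp.1 y)
    have hpm := fun m h1 h2 => pointwise_max (fun m => av P m f y - c) hrp w n m h1 h2
    by_cases hy : ∀ m, w ≤ m → m ≤ w + n → |av P m f y - c| ≤ η
    · have : B y = 0 := by simp only [hBdef]; rw [if_pos hy]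
      rw [this, zero_mul]
      exact (sq_nonneg _).trans (hpm w le_rfl (by omega))
    · have : B y = 1 := by simp only [hBdef]; rw [if_neg hy]
      rw [this, one_mul]
      push Not at hy
      obtain ⟨m, h1, h2, h3⟩ := hy
      refine le_trans ?_ (hpm m h1 h2)
      show η ^ 2 ≤ (av P m f y - c) ^ 2
      rw [← sq_abs (av P m f y - c)]
      exact pow_le_pow_left₀ hη.le h3.le 2
  have hb : ∀ m y, |av P m f y - c| ≤ 1 := by
    intro m y
    have := av_mem hP m hf0 hf1 y
    exact abs_le.2 ⟨by linarith, by linarith⟩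
  have h1 := av_le_avoid hP hB f c η hη.le w n hb hG n (w + n) le_rfl le_rfl x
  have h2 := avoid_le hP hp h0 hle1 ht hd hn x
  linarith [(abs_le.1 h1).2]

end ineqTwo

section asymptotics

/-- All rows of the heat kernel are `ε`-close to stationarity. -/
def CM {Ω : Type} [Fintype Ω] [DecidableEq Ω] (P : Matrix Ω Ω ℝ) (pi : Ω → ℝ) (t ε : ℝ) : Prop :=
  ∀ x, tvDist (Hr P t x) pi ≤ ε

/-- All rows of the averaged kernel are `ε`-close to stationarity. -/
def AM {Ω : Type} [Fintype Ω] [DecidableEq Ω] (P : Matrix Ω Ω ℝ) (pi : Ω → ℝ) (m : ℕ) (ε : ℝ) :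
    Prop :=
  ∀ x, tvDist (Ar P m x) pi ≤ ε

lemma unif1 {ε ε' a b : ℝ} (hε : 0 ≤ ε) (hεε : ε < ε') (ha : 0 < a) (hab : a < b) :
    ∃ T0 : ℝ, ∀ T ≥ T0, ∀ (Ω : Type) [Fintype Ω] [DecidableEq Ω] (P : Matrix Ω Ω ℝ) (pi : Ω → ℝ),
      IsRevMC P pi → (∃ m : ℕ, (m : ℝ) ≤ a * T ∧ AM P pi m ε) → CM P pi (b * T) ε' := by
  set η := (ε' - ε) / 4 with hη
  have hηp : 0 < η := by rw [hη]; linarith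
  have hb : 0 < b := by linarith
  have hd : 0 < b - a := by linarith
  set K := b / (b - a) ^ 2 + 1 / (η * b) with hK
  refine ⟨max 1 (K / η), ?_⟩
  rintro T hT Ω _ _ P pi hM ⟨m, hm, hA⟩ x
  have hT1 : 1 ≤ T := (le_max_left _ _).trans hT
  have hT2 : K / η ≤ T := (le_max_right _ _).trans hT
  have hTp : 0 < T := by linarith
  have hms : (m : ℝ) < b * T := by nlinarith
  refine (ineq1 hM.1.1 hM.1.2.2.1 hms hηp hε hA x).trans ?_
  have h1 : b * T / (b * T - m) ^ 2 ≤ b / (b - a) ^ 2 / T := by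
    have h2 : (b - a) * T ≤ b * T - m := by linarith
    have h3 : 0 < (b - a) * T := by positivity
    calc b * T / (b * T - m) ^ 2 ≤ b * T / ((b - a) * T) ^ 2 := by gcongr
      _ = _ := by field_simp
  have h2 : 1 / (η * (b * T)) = 1 / (η * b) / T := by field_simp
  have h3 : K / T ≤ η := by
    rw [div_le_iff₀ hTp]; rw [div_le_iff₀ hηp] at hT2; linarith
  have h4 : K / T = b / (b - a) ^ 2 / T + 1 / (η * b) / T := by rw [hK]; ring
  rw [h2]
  linarith

lemma unif2 {ε ε' a b : ℝ} (hεε : ε < ε') (ha : 0 < a) (hab : a < b) :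
    ∃ L T0 : ℝ, 0 < L ∧ ∀ T ≥ T0, ∀ (Ω : Type) [Fintype Ω] [DecidableEq Ω] (P : Matrix Ω Ω ℝ)
      (pi : Ω → ℝ), IsRevMC P pi → (∃ t : ℝ, 0 ≤ t ∧ t ≤ a * T ∧ CM P pi t ε) →
      (∃ t : ℝ, 0 ≤ t ∧ t ≤ 2 * T ∧ CM P pi t (Real.exp (-L) / 2)) →
      ∃ m : ℕ, (m : ℝ) ≤ b * T ∧ AM P pi m ε' := by
  set η := (ε' - ε) / 4 with hη
  have hηp : 0 < η := by rw [hη]; linarith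
  set δ := b - a with hδ
  have hd : 0 < δ := by rw [hδ]; linarith
  set K := 16 * a / δ ^ 2 + 8 / (δ * η ^ 2) with hK
  refine ⟨16 / (δ * η ^ 3), max (max 1 (K / η)) (4 / δ), by positivity, ?_⟩
  set L := 16 / (δ * η ^ 3) with hL
  have hLp : 0 < L := by rw [hL]; positivity
  rintro T hT Ω _ _ P pi hM ⟨t, ht, hta, hC⟩ ⟨t0, ht0, htT, hC0⟩
  have hT1 : 1 ≤ T := (le_max_left _ _).trans ((le_max_left _ _).trans hT)
  have hT2 : K / η ≤ T := (le_max_right _ _).trans ((le_max_left _ _).trans hT)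
  have hT3 : 4 / δ ≤ T := (le_max_right _ _).trans hT
  have hTp : 0 < T := by linarith
  set n := ⌈(a + δ / 4) * T⌉₊ with hn
  set w := ⌈δ / 4 * T⌉₊ with hw
  have hn1 : (a + δ / 4) * T ≤ n := Nat.le_ceil _
  have hn2 : (n : ℝ) < (a + δ / 4) * T + 1 := Nat.ceil_lt_add_one (by positivity)
  have hw1 : δ / 4 * T ≤ w := Nat.le_ceil _
  have hw2 : (w : ℝ) < δ / 4 * T + 1 := Nat.ceil_lt_add_one (by positivity)
  have hwp : 1 ≤ w := Nat.ceil_pos.2 (by positivity)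
  have hdT : 0 < δ / 4 * T := by positivity
  have hnt : δ / 4 * T ≤ n - t := by nlinarith
  refine ⟨w + n, ?_, fun x => ?_⟩
  · push_cast
    rw [div_le_iff₀ hd] at hT3
    have : b = a + δ := by rw [hδ]; ring
    rw [this]
    nlinarith
  · refine (ineq2 hM ht hC ht0 hLp hC0 (n := n) (by linarith) hwp hηp x).trans ?_
    have h1 : t / (n - t) ^ 2 ≤ 16 * a / δ ^ 2 / T := by
      calc t / (n - t) ^ 2 ≤ (a * T) / (δ / 4 * T) ^ 2 := by gcongr
        _ = _ := by field_simp; ring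
    have h2 : 2 * (t0 / L + 1) / w / η ^ 2 ≤ η + 8 / (δ * η ^ 2) / T := by
      calc 2 * (t0 / L + 1) / w / η ^ 2 ≤ 2 * (2 * T / L + 1) / (δ / 4 * T) / η ^ 2 := by gcongr
        _ = _ := by rw [hL]; field_simp; ring
    have h3 : K / T ≤ η := by
      rw [div_le_iff₀ hTp]; rw [div_le_iff₀ hηp] at hT2; linarith
    have h4 : K / T = 16 * a / δ ^ 2 / T + 8 / (δ * η ^ 2) / T := by rw [hK]; ring
    linarith

section mix
variable {Ω : Type} [Fintype Ω] [DecidableEq Ω] [Nonempty Ω] {P : Matrix Ω Ω ℝ} {pi : Ω → ℝ}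

lemma contMix_nonneg (ε : ℝ) : 0 ≤ contMix P pi ε := Real.sInf_nonneg (fun _ h => h.1)

lemma contMix_le {t ε : ℝ} (ht : 0 ≤ t) (h : CM P pi t ε) : contMix P pi ε ≤ t :=
  csInf_le ⟨0, fun _ h => h.1⟩ ⟨ht, (contMax_le_iff P pi t ε).2 h⟩

lemma contMix_nonempty {ε : ℝ} (h : contMix P pi ε ≠ 0) :
    {t : ℝ | 0 ≤ t ∧ contDistMax P pi t ≤ ε}.Nonempty := by
  by_contra hn
  rw [Set.not_nonempty_iff_eq_empty] at hn
  exact h (by rw [contMix, hn, Real.sInf_empty])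

lemma contMix_lt {ε u : ℝ} (h : contMix P pi ε ≠ 0) (hu : contMix P pi ε < u) :
    ∃ t, 0 ≤ t ∧ t < u ∧ CM P pi t ε := by
  obtain ⟨t, ht, htu⟩ := exists_lt_of_csInf_lt (contMix_nonempty h) hu
  exact ⟨t, ht.1, htu, (contMax_le_iff P pi t ε).1 ht.2⟩

lemma contMix_anti {ε ε' : ℝ} (h : contMix P pi ε ≠ 0) (hee : ε ≤ ε') :
    contMix P pi ε' ≤ contMix P pi ε :=
  csInf_le_csInf ⟨0, fun _ h => h.1⟩ (contMix_nonempty h) (fun _ ht => ⟨ht.1, ht.2.trans hee⟩)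

lemma aveMix_le {m : ℕ} {ε : ℝ} (h : AM P pi m ε) : aveMix P pi ε ≤ m :=
  Nat.sInf_le ((aveMax_le_iff P pi m ε).2 h)

lemma aveMix_mem {m : ℕ} {ε : ℝ} (h : AM P pi m ε) : AM P pi (aveMix P pi ε) ε := by
  have : aveMix P pi ε ∈ {t : ℕ | aveDistMax P pi t ≤ ε} :=
    Nat.sInf_mem ⟨m, (aveMax_le_iff P pi m ε).2 h⟩
  exact (aveMax_le_iff P pi _ ε).1 this

lemma aveMix_mem' {ε : ℝ} (h : aveMix P pi ε ≠ 0) : AM P pi (aveMix P pi ε) ε := by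
  have hne : {t : ℕ | aveDistMax P pi t ≤ ε}.Nonempty := by
    by_contra hn
    rw [Set.not_nonempty_iff_eq_empty] at hn
    exact h (by rw [aveMix, hn, Nat.sInf_empty])
  have : aveMix P pi ε ∈ {t : ℕ | aveDistMax P pi t ≤ ε} := Nat.sInf_mem hne
  exact (aveMax_le_iff P pi _ ε).1 this

lemma aveMix_anti {ε ε' : ℝ} (h : aveMix P pi ε ≠ 0) (hee : ε ≤ ε') :
    aveMix P pi ε' ≤ aveMix P pi ε :=
  aveMix_le (fun x => (aveMix_mem' h x).trans hee)

/-- One step back, the averaged chain is within `1/2 + ε`. -/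
lemma AM_back (hP : IsStochastic P) (hp : IsProbVec pi) {m : ℕ} {ε : ℝ}
    (h : AM P pi (m + 1) ε) : AM P pi m (1 / 2 + ε) := by
  intro x
  refine tv_le (by rw [Ar_sum hP, hp.2]) (fun f hf0 hf1 => ?_)
  have h1 := (abs_le.1 ((tv_ge (μ := Ar P (m + 1) x) (ν := pi) (by rw [Ar_sum hP, hp.2])
    hf0 hf1).trans (h x))).2
  rw [Ar_apply] at h1 ⊢
  simp only [av] at h1 ⊢
  have h2 := stoch_mulVec_le (stoch_pow hP m) hf1 x
  have h3 := stoch_mulVec_nonneg (stoch_pow hP (m + 1 + 1)) hf0 x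
  linarith

/-- Lower bound on the continuous mixing time. -/
lemma contMix_ge (hP : IsStochastic P) (hp : IsProbVec pi) {ε M : ℝ} (hM : 2 * ε ≤ Real.exp (-M))
    (h1 : contMix P pi (1 - ε) ≠ 0) (h2 : contMix P pi ε ≠ 0) : M ≤ contMix P pi ε := by
  have h3 : ¬ CM P pi 0 (1 - ε) := fun h =>
    h1 (le_antisymm (contMix_le le_rfl h) (contMix_nonneg _))
  simp only [CM, not_forall, not_le] at h3
  obtain ⟨x, hx⟩ := h3
  have hpx : pi x < ε := by
    have : tvDist (Hr P 0 x) pi ≤ 1 - pi x := by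
      refine tv_le (by rw [Hr_sum hP le_rfl, hp.2]) (fun f hf0 hf1 => ?_)
      rw [Hr_apply hP le_rfl]
      have e : ∑' k, pw 0 k * (P ^ k *ᵥ f) x = f x := by
        rw [tsum_eq_single 0]
        · simp [pw]
        · intro k hk; simp [pw, hk]
      rw [e]
      have : pi x * f x ≤ ∑ y, pi y * f y :=
        Finset.single_le_sum (f := fun y => pi y * f y)
          (fun y _ => mul_nonneg (hp.1 y) (hf0 y)) (Finset.mem_univ x)
      have hpx1 : pi x ≤ 1 := by
        rw [← hp.2]; exact Finset.single_le_sum (fun y _ => hp.1 y) (Finset.mem_univ x)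
      nlinarith [hf1 x, hf0 x]
    linarith
  refine le_csInf (contMix_nonempty h2) ?_
  rintro t ⟨ht, htd⟩
  have hc := (contMax_le_iff P pi t ε).1 htd x
  have h4 := (abs_le.1 (tv_ge (μ := Hr P t x) (ν := pi) (f := fun y => if y = x then 1 else 0)
    (by rw [Hr_sum hP ht, hp.2]) (fun y => by split_ifs <;> norm_num)
    (fun y => by split_ifs <;> norm_num))).2
  simp only [mul_ite, mul_one, mul_zero, Finset.sum_ite_eq', Finset.mem_univ, if_true] at h4
  have h5 : Real.exp (-t) ≤ Hr P t x x := by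
    have := (Hr_summable hP ht x x).le_tsum 0
      (fun k _ => mul_nonneg (pw_nonneg ht k) ((stoch_pow hP k).1 x x))
    have e0 : pw t 0 * (P ^ 0) x x = Real.exp (-t) := by simp [pw]
    rw [e0] at this
    exact this
  have h6 : Real.exp (-t) ≤ Real.exp (-M) := by linarith
  linarith [Real.exp_le_exp.1 h6]

end mix

lemma tend_of {f T : ℕ → ℝ} (hT : ∀ᶠ n in atTop, 0 < T n)
    (h : ∀ δ : ℝ, 0 < δ → δ < 1 → ∀ᶠ n in atTop, (1 - δ) * T n ≤ f n ∧ f n ≤ (1 + δ) * T n) :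
    Tendsto (fun n => f n / T n) atTop (nhds 1) := by
  rw [Metric.tendsto_nhds]
  intro e he
  have hm : 0 < min (e / 2) (1 / 2) := by positivity
  filter_upwards [hT, h (min (e / 2) (1 / 2)) hm
    (lt_of_le_of_lt (min_le_right _ _) (by norm_num))] with n hn hb
  have h1 : 1 - min (e / 2) (1 / 2) ≤ f n / T n := by rw [le_div_iff₀ hn]; exact hb.1
  have h2 : f n / T n ≤ 1 + min (e / 2) (1 / 2) := by rw [div_le_iff₀ hn]; exact hb.2
  have h3 := min_le_left (e / 2) (1 / 2 : ℝ)
  rw [Real.dist_eq, abs_lt]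
  constructor <;> linarith

lemma of_tend {f T : ℕ → ℝ} (hT : ∀ᶠ n in atTop, 0 < T n)
    (h : Tendsto (fun n => f n / T n) atTop (nhds 1)) {δ : ℝ} (hδ : 0 < δ) :
    ∀ᶠ n in atTop, (1 - δ) * T n < f n ∧ f n < (1 + δ) * T n := by
  filter_upwards [hT, h.eventually (lt_mem_nhds (by linarith : 1 - δ < 1)),
    h.eventually (gt_mem_nhds (by linarith : 1 < 1 + δ))] with n hn h1 h2
  rw [lt_div_iff₀ hn] at h1
  rw [div_lt_iff₀ hn] at h2
  exact ⟨h1, h2⟩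

lemma cut_fwd {f : ℕ → ℝ → ℝ} (h0 : ∀ n ε, 0 ≤ f n ε)
    (hanti : ∀ n ε ε', f n ε ≠ 0 → ε ≤ ε' → f n ε' ≤ f n ε)
    (hc : ∀ ε : ℝ, 0 < ε → ε < 1 → Tendsto (fun n => f n ε / f n (1 - ε)) atTop (nhds 1)) :
    (∀ ε : ℝ, 0 < ε → ε < 1 → ∀ᶠ n in atTop, 0 < f n ε) ∧
    ∀ ε : ℝ, 0 < ε → ε < 1 → Tendsto (fun n => f n ε / f n (1 / 2)) atTop (nhds 1) := by
  have hpos : ∀ ε : ℝ, 0 < ε → ε < 1 → ∀ᶠ n in atTop, 0 < f n ε := by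
    intro ε h1 h2
    filter_upwards [(hc ε h1 h2).eventually (lt_mem_nhds (by norm_num : (0 : ℝ) < 1))] with n hn
    refine lt_of_le_of_ne (h0 n ε) (fun h => ?_)
    rw [← h, zero_div] at hn
    exact lt_irrefl _ hn
  refine ⟨hpos, fun ε h1 h2 => ?_⟩
  have p1 := hpos ε h1 h2
  have p2 := hpos (1 - ε) (by linarith) (by linarith)
  have p3 := hpos (1 / 2) (by norm_num) (by norm_num)
  rcases le_total ε (1 / 2) with hε | hε
  · refine tendsto_of_tendsto_of_tendsto_of_le_of_le' tendsto_const_nhds (hc ε h1 h2) ?_ ?_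
    · filter_upwards [p1, p3] with n q1 q3
      rw [one_le_div q3]
      exact hanti n ε (1 / 2) q1.ne' hε
    · filter_upwards [p1, p2, p3] with n q1 q2 q3
      exact div_le_div_of_nonneg_left q1.le q2 (hanti n (1 / 2) (1 - ε) q3.ne' (by linarith))
  · refine tendsto_of_tendsto_of_tendsto_of_le_of_le' (hc ε h1 h2) tendsto_const_nhds ?_ ?_
    · filter_upwards [p1, p2, p3] with n q1 q2 q3
      exact div_le_div_of_nonneg_left q1.le q3 (hanti n (1 - ε) (1 / 2) q2.ne' (by linarith))
    · filter_upwards [p3] with n q3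
      rw [div_le_one q3]
      exact hanti n (1 / 2) ε q3.ne' hε

lemma cut_bwd {f : ℕ → ℝ → ℝ} {T : ℕ → ℝ} (hT : ∀ᶠ n in atTop, 0 < T n)
    (h : ∀ ε : ℝ, 0 < ε → ε < 1 → Tendsto (fun n => f n ε / T n) atTop (nhds 1)) (ε : ℝ)
    (h1 : 0 < ε) (h2 : ε < 1) : Tendsto (fun n => f n ε / f n (1 - ε)) atTop (nhds 1) := by
  have := (h ε h1 h2).div (h (1 - ε) (by linarith) (by linarith)) one_ne_zero
  rw [div_one] at this
  refine this.congr' ?_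
  filter_upwards [hT] with n hn
  simp only [Pi.div_apply]
  exact div_div_div_cancel_right₀ hn.ne' _ _

end asymptotics

section final

variable {Ω : ℕ → Type} [∀ n, Fintype (Ω n)] [∀ n, DecidableEq (Ω n)] [∀ n, Nonempty (Ω n)]
  {P : ∀ n, Matrix (Ω n) (Ω n) ℝ} {pi : ∀ n, Ω n → ℝ}

lemma cont_to_ave (hM : ∀ n, IsRevMC (P n) (pi n)) {T : ℕ → ℝ} (hT : Tendsto T atTop atTop)
    (h : ∀ ε : ℝ, 0 < ε → ε < 1 →
      Tendsto (fun n => contMix (P n) (pi n) ε / T n) atTop (nhds 1))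
    (ε : ℝ) (h0 : 0 < ε) (h1 : ε < 1) :
    Tendsto (fun n => (aveMix (P n) (pi n) ε : ℝ) / T n) atTop (nhds 1) := by
  have hTp := hT.eventually_gt_atTop 0
  refine tend_of hTp (fun δ hδ hδ1 => ?_)
  obtain ⟨L, T0, hL, hU⟩ := unif2 (ε := ε / 2) (ε' := ε) (a := 1 + δ / 2) (b := 1 + δ)
    (by linarith) (by linarith) (by linarith)
  obtain ⟨T1, hV⟩ := unif1 (ε := ε) (ε' := (1 + ε) / 2) (a := 1 - δ) (b := 1 - δ / 2)
    h0.le (by linarith) (by linarith) (by linarith)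
  have hLe : Real.exp (-L) < 1 := by rw [Real.exp_lt_one_iff]; linarith
  filter_upwards [hTp, hT.eventually_ge_atTop T0, hT.eventually_ge_atTop T1,
    of_tend hTp (h (ε / 2) (by linarith) (by linarith)) (δ := δ / 2) (by linarith),
    of_tend hTp (h (Real.exp (-L) / 2) (by positivity) (by linarith)) (δ := 1 / 2) (by norm_num),
    of_tend hTp (h ((1 + ε) / 2) (by linarith) (by linarith)) (δ := δ / 2) (by linarith)]
    with n n1 n2 n3 n4 n5 n6
  have q4 : contMix (P n) (pi n) (ε / 2) ≠ 0 := by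
    have : 0 < (1 - δ / 2) * T n := mul_pos (by linarith) n1
    linarith [n4.1]
  have q5 : contMix (P n) (pi n) (Real.exp (-L) / 2) ≠ 0 := by
    have : 0 < (1 - 1 / 2) * T n := mul_pos (by norm_num) n1
    linarith [n5.1]
  obtain ⟨t, ht, ht1, hC⟩ := contMix_lt q4 n4.2
  obtain ⟨t0, ht0, ht01, hC0⟩ := contMix_lt q5 n5.2
  obtain ⟨m, hm, hA⟩ := hU (T n) n2 (Ω n) (P n) (pi n) (hM n) ⟨t, ht, ht1.le, hC⟩
    ⟨t0, ht0, by linarith, hC0⟩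
  constructor
  · by_contra hlt
    push Not at hlt
    have := hV (T n) n3 (Ω n) (P n) (pi n) (hM n) ⟨_, hlt.le, aveMix_mem hA⟩
    have := contMix_le (mul_nonneg (by linarith) n1.le) this
    linarith [n6.1]
  · have : (aveMix (P n) (pi n) ε : ℝ) ≤ m := by exact_mod_cast aveMix_le hA
    linarith

lemma ave_to_cont (hM : ∀ n, IsRevMC (P n) (pi n)) {T : ℕ → ℝ} (hT : Tendsto T atTop atTop)
    (h : ∀ ε : ℝ, 0 < ε → ε < 1 →
      Tendsto (fun n => (aveMix (P n) (pi n) ε : ℝ) / T n) atTop (nhds 1))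
    (ε : ℝ) (h0 : 0 < ε) (h1 : ε < 1) :
    Tendsto (fun n => contMix (P n) (pi n) ε / T n) atTop (nhds 1) := by
  have hTp := hT.eventually_gt_atTop 0
  have hup : ∀ ε : ℝ, 0 < ε → ε < 1 → ∀ δ : ℝ, 0 < δ → δ ≤ 1 →
      ∀ᶠ n in atTop, CM (P n) (pi n) ((1 + δ) * T n) ε := by
    intro ε h0 h1 δ hδ hδ1
    obtain ⟨T1, hV⟩ := unif1 (ε := ε / 2) (ε' := ε) (a := 1 + δ / 2) (b := 1 + δ)
      (by linarith) (by linarith) (by linarith) (by linarith)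
    filter_upwards [hTp, hT.eventually_ge_atTop T1,
      of_tend hTp (h (ε / 2) (by linarith) (by linarith)) (δ := δ / 2) (by linarith)]
      with n n1 n3 n4
    refine hV (T n) n3 (Ω n) (P n) (pi n) (hM n) ⟨aveMix (P n) (pi n) (ε / 2), n4.2.le, ?_⟩
    refine aveMix_mem' (fun h => ?_)
    have : 0 < (1 - δ / 2) * T n := mul_pos (by linarith) n1
    have := n4.1
    rw [h, Nat.cast_zero] at this
    linarith
  refine tend_of hTp (fun δ hδ hδ1 => ?_)
  obtain ⟨L, T0, hL, hU⟩ := unif2 (ε := ε) (ε' := (1 + ε) / 2) (a := 1 - δ) (b := 1 - δ / 2)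
    (by linarith) (by linarith) (by linarith)
  have hLe : Real.exp (-L) < 1 := by rw [Real.exp_lt_one_iff]; linarith
  filter_upwards [hTp, hT.eventually_ge_atTop T0, hup ε h0 h1 δ hδ hδ1.le,
    hup (Real.exp (-L) / 2) (by positivity) (by linarith) 1 one_pos le_rfl,
    of_tend hTp (h ((1 + ε) / 2) (by linarith) (by linarith)) (δ := δ / 2) (by linarith)]
    with n n1 n2 n3 n4 n5
  have hnn : 0 ≤ (1 + δ) * T n := mul_nonneg (by linarith) n1.le
  refine ⟨?_, contMix_le hnn n3⟩
  refine le_csInf ⟨_, hnn, (contMax_le_iff _ _ _ _).2 n3⟩ ?_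
  rintro t ⟨ht, htd⟩
  by_contra hlt
  push Not at hlt
  obtain ⟨m, hm, hA⟩ := hU (T n) n2 (Ω n) (P n) (pi n) (hM n)
    ⟨t, ht, hlt.le, (contMax_le_iff _ _ _ _).1 htd⟩ ⟨_, by linarith, by linarith, n4⟩
  have : (aveMix (P n) (pi n) ((1 + ε) / 2) : ℝ) ≤ m := by exact_mod_cast aveMix_le hA
  linarith [n5.1]

lemma main_iff (hM : ∀ n, IsRevMC (P n) (pi n)) : ContCutoff P pi ↔ AveCutoff P pi := by
  constructor
  · intro hc
    obtain ⟨hpos, hrat⟩ := cut_fwd (f := fun n ε => contMix (P n) (pi n) ε)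
      (fun n ε => contMix_nonneg ε) (fun n ε ε' h hee => contMix_anti h hee) hc
    have hTp := hpos (1 / 2) (by norm_num) (by norm_num)
    have hT : Tendsto (fun n => contMix (P n) (pi n) (1 / 2)) atTop atTop := by
      rw [tendsto_atTop]
      intro M
      set ε := Real.exp (-(2 * |M|)) / 2 with hε
      have he : 0 < ε := by positivity
      have he1 : ε ≤ 1 / 2 := by
        have : Real.exp (-(2 * |M|)) ≤ 1 := by
          rw [Real.exp_le_one_iff]; linarith [abs_nonneg M]
        rw [hε]; linarith
      filter_upwards [hpos ε he (by linarith), hpos (1 - ε) (by linarith) (by linarith),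
        of_tend hTp (hrat ε he (by linarith)) (δ := 1) one_pos] with n n1 n2 n3
      have := contMix_ge (hM n).1.1 (hM n).1.2.2.1 (ε := ε) (M := 2 * |M|)
        (by rw [hε]; linarith) n2.ne' n1.ne'
      linarith [le_abs_self M, n3.2]
    exact cut_bwd (f := fun n ε => (aveMix (P n) (pi n) ε : ℝ)) hTp (cont_to_ave hM hT hrat)
  · intro hc
    obtain ⟨hpos, hrat⟩ := cut_fwd (f := fun n ε => (aveMix (P n) (pi n) ε : ℝ))
      (fun n ε => Nat.cast_nonneg _)
      (fun n ε ε' h hee => by exact_mod_cast aveMix_anti (by exact_mod_cast h) hee) hc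
    have hTp := hpos (1 / 2) (by norm_num) (by norm_num)
    have hT : Tendsto (fun n => (aveMix (P n) (pi n) (1 / 2) : ℝ)) atTop atTop := by
      rw [tendsto_atTop]
      intro M
      set δ := 1 / (2 * (|M| + 1)) with hδ
      have hMp : 0 < |M| + 1 := by linarith [abs_nonneg M]
      have hδp : 0 < δ := by positivity
      filter_upwards [hpos (1 / 4) (by norm_num) (by norm_num), hTp,
        of_tend hTp (hrat (1 / 4) (by norm_num) (by norm_num)) hδp,
        of_tend hTp (hrat (3 / 4) (by norm_num) (by norm_num)) hδp] with n n1 n2 n3 n4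
      have hne : aveMix (P n) (pi n) (1 / 4) ≠ 0 := by
        intro h; rw [h, Nat.cast_zero] at n1; exact lt_irrefl _ n1
      obtain ⟨k, hk⟩ := Nat.exists_eq_succ_of_ne_zero hne
      have hA := aveMix_mem' hne
      rw [hk] at hA
      have hB := AM_back (hM n).1.1 (hM n).1.2.2.1 hA
      have e : (1 / 2 + 1 / 4 : ℝ) = 3 / 4 := by norm_num
      rw [e] at hB
      have h34 : (aveMix (P n) (pi n) (3 / 4) : ℝ) ≤ k := by exact_mod_cast aveMix_le hB
      have h14 : (aveMix (P n) (pi n) (1 / 4) : ℝ) = k + 1 := by rw [hk]; push_cast; ring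
      have h5 : 1 ≤ 2 * δ * (aveMix (P n) (pi n) (1 / 2) : ℝ) := by linarith [n3.2, n4.1]
      have h6 : 2 * δ = 1 / (|M| + 1) := by rw [hδ]; field_simp
      rw [h6, one_div, inv_mul_eq_div, le_div_iff₀ hMp] at h5
      linarith [le_abs_self M]
    exact cut_bwd (f := fun n ε => contMix (P n) (pi n) ε) hTp (ave_to_cont hM hT hrat)

end final

end CutoffProof

/-- **Corollary 1.5 of Hermon–Peres, (i) ↔ (iii).**
A sequence of finite irreducible reversible Markov chains exhibits a continuous-time cutoff
iff it exhibits an averaged cutoff. -/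
theorem contCutoff_iff_aveCutoff :
    ∀ (Ω : ℕ → Type) [∀ n, Fintype (Ω n)] [∀ n, DecidableEq (Ω n)] [∀ n, Nonempty (Ω n)]
      (P : ∀ n, Matrix (Ω n) (Ω n) ℝ) (pi : ∀ n, Ω n → ℝ),
      (∀ n, IsRevMC (P n) (pi n)) →
      (ContCutoff P pi ↔ AveCutoff P pi) := by
  intro Ω _ _ _ P pi hM
  exact CutoffProof.main_iff hM
end

section
/- Let (Ω_n, P_n, π_n) be a sequence of finite irreducible reversible Markov chains exhibiting a continuous-time cutoff. Then lim_{n→∞} t_ave^{(n)}(1/4) / t_c^{(n)}(1/4) = 1 and lim_{n→∞} t_L^{(n)}(1/4) / (2 t_c^{(n)}(1/4)) = 1. -/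
open Matrix Filter Asymptotics

section heatkernel

/-- Poisson weight. -/
noncomputable def pw (t : ℝ) (k : ℕ) : ℝ := Real.exp (-t) * t ^ k / (Nat.factorial k)

/-- The heat kernel. -/
noncomputable def heat {Ω : Type*} [Fintype Ω] [DecidableEq Ω] (P : Matrix Ω Ω ℝ) (t : ℝ) :
    Matrix Ω Ω ℝ := Real.exp (-t) • NormedSpace.exp (t • P)

variable {Ω : Type*} [Fintype Ω] [DecidableEq Ω]

section
attribute [local instance] Matrix.linftyOpNormedRing Matrix.linftyOpNormedAlgebra

theorem heat_hasSum (P : Matrix Ω Ω ℝ) (t : ℝ) :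
    HasSum (fun k => pw t k • P ^ k) (heat P t) := by
  have h := NormedSpace.exp_series_hasSum_exp' (𝕂 := ℝ) (t • P)
  have h2 := h.const_smul (Real.exp (-t))
  have e : (fun k => pw t k • P ^ k) =
      fun k => Real.exp (-t) • ((Nat.factorial k : ℝ)⁻¹ • (t • P) ^ k) := by
    funext k
    rw [smul_pow, smul_smul, smul_smul]
    congr 1
    unfold pw; ring
  rw [e]; exact h2

theorem heat_lazy (P : Matrix Ω Ω ℝ) (t : ℝ) : heat (lazyM P) (2 * t) = heat P t := by
  unfold heat lazyM
  have h1 : (2 * t) • (2:ℝ)⁻¹ • (1 + P) = t • (1 : Matrix Ω Ω ℝ) + t • P := by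
    rw [smul_smul, smul_add]; congr 2 <;> ring
  rw [h1, Matrix.exp_add_of_commute _ _ ((Commute.one_left P).smul_left t |>.smul_right t)]
  have h2 : NormedSpace.exp (t • (1 : Matrix Ω Ω ℝ)) = Real.exp t • 1 := by
    have := NormedSpace.algebraMap_exp_comm (𝔸 := Matrix Ω Ω ℝ) (𝕂 := ℝ) t
    rw [Algebra.algebraMap_eq_smul_one, Algebra.algebraMap_eq_smul_one] at this
    rw [Real.exp_eq_exp_ℝ]; exact this.symm
  rw [h2, smul_mul_assoc, one_mul, smul_smul, ← Real.exp_add]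
  congr 2; ring

end

theorem heat_add (P : Matrix Ω Ω ℝ) (s t : ℝ) : heat P (s + t) = heat P s * heat P t := by
  unfold heat
  rw [add_smul, Matrix.exp_add_of_commute _ _ ((Commute.refl P).smul_left s |>.smul_right t),
    smul_mul_smul_comm, ← Real.exp_add]
  congr 2; ring

theorem heat_zero (P : Matrix Ω Ω ℝ) : heat P 0 = 1 := by
  simp [heat]

theorem heat_hasSum_entry (P : Matrix Ω Ω ℝ) (t : ℝ) (x y : Ω) :
    HasSum (fun k => pw t k * (P ^ k) x y) (heat P t x y) := by
  have h := heat_hasSum P t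
  have := (Pi.hasSum.1 (Pi.hasSum.1 h x)) y
  simpa using this

theorem heat_hasSum_mulVec (P : Matrix Ω Ω ℝ) (t : ℝ) (f : Ω → ℝ) (x : Ω) :
    HasSum (fun k => pw t k * ((P ^ k) *ᵥ f) x) ((heat P t *ᵥ f) x) := by
  have h := hasSum_sum (s := Finset.univ) (fun y _ => (heat_hasSum_entry P t x y).mul_right (f y))
  simp only [mulVec, dotProduct, Finset.mul_sum]
  simpa [mul_assoc] using h

theorem pw_nonneg {t : ℝ} (ht : 0 ≤ t) (k : ℕ) : 0 ≤ pw t k := by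
  unfold pw; positivity

theorem pw_hasSum (t : ℝ) : HasSum (pw t) 1 := by
  have h := (NormedSpace.expSeries_div_hasSum_exp t).mul_left (Real.exp (-t))
  rw [← Real.exp_eq_exp_ℝ, ← Real.exp_add] at h
  simp only [neg_add_cancel, Real.exp_zero] at h
  have e : pw t = fun k => Real.exp (-t) * (t ^ k / (Nat.factorial k : ℝ)) := by
    funext k; unfold pw; ring
  rw [e]; exact h

theorem pw_succ (t : ℝ) (k : ℕ) : pw t (k + 1) * ((k + 1 : ℕ) : ℝ) = t * pw t k := by
  unfold pw
  rw [Nat.factorial_succ]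
  have : (Nat.factorial k : ℝ) ≠ 0 := by positivity
  have h2 : ((k + 1 : ℕ) : ℝ) ≠ 0 := by positivity
  push_cast at h2 ⊢
  field_simp
  try ring

/-- size-biasing of the Poisson law. -/
theorem pw_shift {t : ℝ} {a : ℕ → ℝ} {S : ℝ} (h : HasSum (fun k => pw t k * a (k + 1)) S) :
    HasSum (fun k => pw t k * (k * a k)) (t * S) := by
  rw [← hasSum_nat_add_iff' 1]
  simp only [Finset.range_one, Finset.sum_singleton, Nat.cast_zero, zero_mul, mul_zero, sub_zero]
  have e : (fun k => pw t (k + 1) * (((k + 1 : ℕ) : ℝ) * a (k + 1))) =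
      fun k => t * (pw t k * a (k + 1)) := by
    funext k
    rw [← mul_assoc, pw_succ]; ring
  rw [e]; exact h.mul_left t

theorem pw_mean (t : ℝ) : HasSum (fun k : ℕ => pw t k * (k : ℝ)) t := by
  have h := pw_shift (t := t) (a := fun _ => 1) (S := 1)
    (by simpa only [mul_one] using pw_hasSum t)
  rw [mul_one] at h
  simpa only [mul_one] using h

theorem pw_var (t : ℝ) : HasSum (fun k : ℕ => pw t k * ((k : ℝ) - t) ^ 2) t := by
  have h1 := pw_shift (t := t) (a := fun k => (k : ℝ)) (S := t + 1)
    (by simpa [mul_add] using (pw_mean t).add (pw_hasSum t))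
  have h2 := (h1.sub ((pw_mean t).mul_left (2 * t))).add ((pw_hasSum t).mul_left (t ^ 2))
  have e : (fun k : ℕ => pw t k * ((k : ℝ) - t) ^ 2) =
      fun k : ℕ => pw t k * (k * k) - 2 * t * (pw t k * k) + t ^ 2 * pw t k := by
    funext k; ring
  have e2 : t * (t + 1) - 2 * t * t + t ^ 2 * 1 = t := by ring
  rw [e2] at h2
  rw [e]; exact h2

end heatkernel


set_option linter.unusedSectionVars false

section basics
variable {Ω : Type*} [Fintype Ω] [DecidableEq Ω]

/-- The embedding of `L²(μ)` in Euclidean space. -/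
noncomputable def emb (μ : Ω → ℝ) : (Ω → ℝ) →ₗ[ℝ] EuclideanSpace ℝ Ω where
  toFun f := WithLp.toLp 2 (fun x => Real.sqrt (μ x) * f x)
  map_add' f g := by ext x; simp [mul_add]
  map_smul' c f := by ext x; simp; ring

/-- `L²(μ)` norm. -/
noncomputable def nrm (μ : Ω → ℝ) (f : Ω → ℝ) : ℝ := ‖emb μ f‖

/-- `L²(μ)` inner product. -/
noncomputable def ip (μ : Ω → ℝ) (f g : Ω → ℝ) : ℝ := ∑ x, μ x * (f x * g x)

theorem nrm_nonneg (μ f : Ω → ℝ) : 0 ≤ nrm μ f := norm_nonneg _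

theorem nrm_add_le (μ f g : Ω → ℝ) : nrm μ (f + g) ≤ nrm μ f + nrm μ g := by
  unfold nrm; rw [map_add]; exact norm_add_le _ _

theorem nrm_sub_le (μ f g : Ω → ℝ) : nrm μ (f - g) ≤ nrm μ f + nrm μ g := by
  unfold nrm; rw [map_sub]; exact norm_sub_le _ _

theorem nrm_smul (μ f : Ω → ℝ) (c : ℝ) : nrm μ (c • f) = |c| * nrm μ f := by
  unfold nrm; rw [map_smul, norm_smul, Real.norm_eq_abs]

theorem nrm_neg (μ f : Ω → ℝ) : nrm μ (-f) = nrm μ f := by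
  unfold nrm; rw [map_neg, norm_neg]

theorem inner_emb {μ : Ω → ℝ} (hμ : ∀ x, 0 ≤ μ x) (f g : Ω → ℝ) :
    inner ℝ (emb μ f) (emb μ g) = ip μ f g := by
  simp only [emb, ip, PiLp.inner_apply, LinearMap.coe_mk, AddHom.coe_mk]
  refine Finset.sum_congr rfl fun x _ => ?_
  have := Real.mul_self_sqrt (hμ x)
  simp only [RCLike.inner_apply, conj_trivial]
  calc _ = (Real.sqrt (μ x) * Real.sqrt (μ x)) * (f x * g x) := by ring
    _ = _ := by rw [this]

theorem nrm_sq {μ : Ω → ℝ} (hμ : ∀ x, 0 ≤ μ x) (f : Ω → ℝ) : nrm μ f ^ 2 = ip μ f f := by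
  rw [← inner_emb hμ, real_inner_self_eq_norm_sq]; rfl

theorem ip_le {μ : Ω → ℝ} (hμ : ∀ x, 0 ≤ μ x) (f g : Ω → ℝ) : ip μ f g ≤ nrm μ f * nrm μ g := by
  rw [← inner_emb hμ]; exact real_inner_le_norm _ _

theorem nrm_abs {μ : Ω → ℝ} (hμ : ∀ x, 0 ≤ μ x) (f : Ω → ℝ) :
    nrm μ (fun x => |f x|) = nrm μ f := by
  have : nrm μ (fun x => |f x|) ^ 2 = nrm μ f ^ 2 := by
    rw [nrm_sq hμ, nrm_sq hμ]; simp [ip]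
  exact (sq_eq_sq₀ (nrm_nonneg _ _) (nrm_nonneg _ _)).1 this

theorem nrm_le_of_bdd {μ : Ω → ℝ} (hμ : IsProbVec μ) {f : Ω → ℝ} {c : ℝ} (hc : 0 ≤ c)
    (hf : ∀ x, |f x| ≤ c) : nrm μ f ≤ c := by
  refine le_of_sq_le_sq ?_ hc
  rw [nrm_sq hμ.1]
  calc ip μ f f ≤ ∑ x, μ x * c ^ 2 := by
        refine Finset.sum_le_sum fun x _ => mul_le_mul_of_nonneg_left ?_ (hμ.1 x)
        rw [← sq]; exact sq_le_sq' (abs_le.1 (hf x)).1 (abs_le.1 (hf x)).2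
    _ = c ^ 2 := by rw [← Finset.sum_mul, hμ.2, one_mul]

/-- Schur test for reversible kernels. -/
theorem schur {μ : Ω → ℝ} (hμ : ∀ x, 0 ≤ μ x) {K : Matrix Ω Ω ℝ} {c : ℝ} (hc : 0 ≤ c)
    (hK : ∀ x, ∑ y, |K x y| ≤ c) (hrev : IsReversible K μ) (f : Ω → ℝ) :
    nrm μ (K *ᵥ f) ≤ c * nrm μ f := by
  refine le_of_sq_le_sq ?_ (mul_nonneg hc (nrm_nonneg _ _))
  rw [mul_pow, nrm_sq hμ, nrm_sq hμ]
  have habs : ∀ x y, μ x * |K x y| = μ y * |K y x| := by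
    intro x y
    have := congrArg abs (hrev x y)
    rwa [abs_mul, abs_mul, abs_of_nonneg (hμ x), abs_of_nonneg (hμ y)] at this
  have h1 : ∀ x, (K *ᵥ f) x * (K *ᵥ f) x ≤ c * ∑ y, |K x y| * f y ^ 2 := by
    intro x
    have := Finset.sum_sq_le_sum_mul_sum_of_sq_le_mul Finset.univ
      (r := fun y => K x y * f y) (f := fun y => |K x y|) (g := fun y => |K x y| * f y ^ 2)
      (fun _ _ => abs_nonneg _) (fun _ _ => by positivity)
      (fun y _ => by rw [mul_pow, ← sq_abs (K x y)]; exact le_of_eq (by ring))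
    rw [← sq]
    refine this.trans (mul_le_mul_of_nonneg_right (hK x) ?_)
    exact Finset.sum_nonneg fun y _ => by positivity
  calc ip μ (K *ᵥ f) (K *ᵥ f) ≤ ∑ x, μ x * (c * ∑ y, |K x y| * f y ^ 2) :=
        Finset.sum_le_sum fun x _ => mul_le_mul_of_nonneg_left (h1 x) (hμ x)
    _ = c * ∑ x, ∑ y, (μ x * |K x y|) * f y ^ 2 := by
        rw [Finset.mul_sum]
        refine Finset.sum_congr rfl fun x _ => ?_
        rw [mul_left_comm, Finset.mul_sum]
        congr 1
        exact Finset.sum_congr rfl fun y _ => by ring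
    _ = c * ∑ y, (μ y * f y ^ 2) * ∑ x, |K y x| := by
        rw [Finset.sum_comm]
        congr 1
        refine Finset.sum_congr rfl fun y _ => ?_
        rw [Finset.mul_sum]
        exact Finset.sum_congr rfl fun x _ => by rw [habs]; ring
    _ ≤ c * ∑ y, (μ y * f y ^ 2) * c := by
        refine mul_le_mul_of_nonneg_left ?_ hc
        refine Finset.sum_le_sum fun y _ => mul_le_mul_of_nonneg_left (hK y) ?_
        exact mul_nonneg (hμ y) (sq_nonneg _)
    _ = c ^ 2 * ip μ f f := by
        rw [← Finset.sum_mul]; unfold ip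
        rw [show ∑ x, μ x * (f x * f x) = ∑ x, μ x * f x ^ 2 from
          Finset.sum_congr rfl fun x _ => by ring]
        ring

theorem ip_symm_of_rev {μ : Ω → ℝ} {K : Matrix Ω Ω ℝ} (hrev : IsReversible K μ) (f g : Ω → ℝ) :
    ip μ (K *ᵥ f) g = ip μ f (K *ᵥ g) := by
  unfold ip
  simp only [mulVec, dotProduct, Finset.sum_mul, Finset.mul_sum]
  rw [Finset.sum_comm]
  refine Finset.sum_congr rfl fun y _ => Finset.sum_congr rfl fun x _ => ?_
  calc μ x * (K x y * f y * g x) = (μ x * K x y) * (f y * g x) := by ring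
    _ = _ := by rw [hrev x y]; ring

/-- mean -/
noncomputable def mean (μ f : Ω → ℝ) : ℝ := ∑ x, μ x * f x

theorem mean_mulVec {μ : Ω → ℝ} {P : Matrix Ω Ω ℝ} (h : μ ᵥ* P = μ) (f : Ω → ℝ) :
    mean μ (P *ᵥ f) = mean μ f := by
  have := Matrix.dotProduct_mulVec μ P f
  rw [h] at this; exact this

theorem mean_add (μ f g : Ω → ℝ) : mean μ (f + g) = mean μ f + mean μ g := by
  simp [mean, mul_add, Finset.sum_add_distrib]

theorem mean_sub (μ f g : Ω → ℝ) : mean μ (f - g) = mean μ f - mean μ g := by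
  simp [mean, mul_sub, Finset.sum_sub_distrib]

theorem mean_const {μ : Ω → ℝ} (hμ : IsProbVec μ) (c : ℝ) : mean μ (fun _ => c) = c := by
  simp [mean, ← Finset.sum_mul, hμ.2]

theorem mean_mono {μ : Ω → ℝ} (hμ : IsProbVec μ) {f g : Ω → ℝ} (h : ∀ x, f x ≤ g x) :
    mean μ f ≤ mean μ g :=
  Finset.sum_le_sum fun x _ => mul_le_mul_of_nonneg_left (h x) (hμ.1 x)

theorem mean_abs_le {μ : Ω → ℝ} (hμ : IsProbVec μ) {f : Ω → ℝ} {c : ℝ} (h : ∀ x, |f x| ≤ c) :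
    |mean μ f| ≤ c := by
  rw [abs_le]
  constructor
  · rw [← mean_const hμ (-c)]; exact mean_mono hμ fun x => (abs_le.1 (h x)).1
  · rw [← mean_const hμ c]; exact mean_mono hμ fun x => (abs_le.1 (h x)).2

theorem sto_mono {P : Matrix Ω Ω ℝ} (hP : IsStochastic P) {f g : Ω → ℝ} (h : ∀ x, f x ≤ g x)
    (x : Ω) : (P *ᵥ f) x ≤ (P *ᵥ g) x :=
  Finset.sum_le_sum fun y _ => mul_le_mul_of_nonneg_left (h y) (hP.1 x y)

theorem sto_const {P : Matrix Ω Ω ℝ} (hP : IsStochastic P) (c : ℝ) :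
    P *ᵥ (fun _ => c) = fun _ => c := by
  ext x; simp [mulVec, dotProduct, ← Finset.sum_mul, hP.2 x]

theorem sto_abs {P : Matrix Ω Ω ℝ} (hP : IsStochastic P) {f : Ω → ℝ} {c : ℝ}
    (h : ∀ x, |f x| ≤ c) (x : Ω) : |(P *ᵥ f) x| ≤ c := by
  rw [abs_le]
  constructor
  · have := sto_mono hP (f := fun _ => -c) (fun y => (abs_le.1 (h y)).1) x
    rwa [sto_const hP] at this
  · have := sto_mono hP (g := fun _ => c) (fun y => (abs_le.1 (h y)).2) x
    rwa [sto_const hP] at this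

theorem sto_pow_abs {P : Matrix Ω Ω ℝ} (hP : IsStochastic P) {f : Ω → ℝ} {c : ℝ}
    (h : ∀ x, |f x| ≤ c) (k : ℕ) : ∀ x : Ω, |((P ^ k) *ᵥ f) x| ≤ c := by
  induction k with
  | zero => simpa using h
  | succ k ih =>
    intro x
    rw [pow_succ', ← mulVec_mulVec]
    exact sto_abs hP ih x

theorem mean_pow {μ : Ω → ℝ} {P : Matrix Ω Ω ℝ} (h : μ ᵥ* P = μ) (k : ℕ) (f : Ω → ℝ) :
    mean μ ((P ^ k) *ᵥ f) = mean μ f := by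
  induction k with
  | zero => simp
  | succ k ih => rw [pow_succ', ← mulVec_mulVec, mean_mulVec h, ih]

theorem sto_pow_const {P : Matrix Ω Ω ℝ} (hP : IsStochastic P) (c : ℝ) (k : ℕ) :
    (P ^ k) *ᵥ (fun _ => c) = fun _ => c := by
  induction k with
  | zero => simp
  | succ k ih => rw [pow_succ', ← mulVec_mulVec, ih, sto_const hP]

theorem rev_pow {μ : Ω → ℝ} {P : Matrix Ω Ω ℝ} (h : IsReversible P μ) (k : ℕ) :
    IsReversible (P ^ k) μ := by
  induction k with
  | zero =>
    intro x y
    by_cases hxy : x = y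
    · rw [hxy]
    · simp [hxy, Ne.symm hxy]
  | succ k ih =>
    intro x y
    rw [pow_succ, mul_apply, ← pow_succ, pow_succ', mul_apply, Finset.mul_sum, Finset.mul_sum]
    refine Finset.sum_congr rfl fun z _ => ?_
    calc μ x * ((P ^ k) x z * P z y) = (μ x * (P ^ k) x z) * P z y := by ring
      _ = (μ z * P z y) * (P ^ k) z x := by rw [ih]; ring
      _ = _ := by rw [h]; ring

theorem rev_heat {μ : Ω → ℝ} {P : Matrix Ω Ω ℝ} (h : IsReversible P μ) (t : ℝ) :
    IsReversible (heat P t) μ := by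
  intro x y
  have h1 := (heat_hasSum_entry P t x y).mul_left (μ x)
  have h2 := (heat_hasSum_entry P t y x).mul_left (μ y)
  refine h1.unique ?_
  convert h2 using 2 with k
  rw [mul_left_comm, rev_pow h k x y]; ring

theorem mean_heat {μ : Ω → ℝ} {P : Matrix Ω Ω ℝ} (h : μ ᵥ* P = μ) (t : ℝ) (f : Ω → ℝ) :
    mean μ (heat P t *ᵥ f) = mean μ f := by
  have h1 := hasSum_sum (s := Finset.univ)
    (fun x _ => (heat_hasSum_mulVec P t f x).mul_left (μ x))
  have h2 := (pw_hasSum t).mul_right (mean μ f)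
  rw [one_mul] at h2
  refine h1.unique ?_
  have e : (fun k => ∑ x, μ x * (pw t k * ((P ^ k) *ᵥ f) x)) = fun k => pw t k * mean μ f := by
    funext k
    rw [← mean_pow h k f, mean, Finset.mul_sum]
    exact Finset.sum_congr rfl fun x _ => by ring
  rw [e]; exact h2

theorem heat_const {P : Matrix Ω Ω ℝ} (hP : IsStochastic P) (t c : ℝ) :
    heat P t *ᵥ (fun _ => c) = fun _ => c := by
  ext x
  have h1 := heat_hasSum_mulVec P t (fun _ => c) x
  simp only [sto_pow_const hP] at h1
  have h2 := (pw_hasSum t).mul_right c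
  rw [one_mul] at h2
  exact h1.unique h2

theorem nrm_sto {μ : Ω → ℝ} {P : Matrix Ω Ω ℝ} (hμ : ∀ x, 0 ≤ μ x) (hP : IsStochastic P)
    (h : IsReversible P μ) (f : Ω → ℝ) : nrm μ (P *ᵥ f) ≤ nrm μ f := by
  have := schur hμ zero_le_one (K := P) (fun x => by
    rw [← hP.2 x]; exact le_of_eq (Finset.sum_congr rfl fun y _ => abs_of_nonneg (hP.1 x y))) h f
  rwa [one_mul] at this

theorem nrm_sto_pow {μ : Ω → ℝ} {P : Matrix Ω Ω ℝ} (hμ : ∀ x, 0 ≤ μ x) (hP : IsStochastic P)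
    (h : IsReversible P μ) (k : ℕ) (f : Ω → ℝ) : nrm μ ((P ^ k) *ᵥ f) ≤ nrm μ f := by
  induction k with
  | zero => simp
  | succ k ih =>
    rw [pow_succ', ← mulVec_mulVec]
    exact (nrm_sto hμ hP h _).trans ih

end basics

set_option linter.unusedSectionVars false

section core
variable {Ω : Type*} [Fintype Ω] [DecidableEq Ω]

/-- worst-case total variation distance of the rows of `M` from `μ`. -/
noncomputable def dmax (M : Matrix Ω Ω ℝ) (μ : Ω → ℝ) : ℝ := ⨆ x, tvDist (M x) μ

theorem tv_le_dmax (M : Matrix Ω Ω ℝ) (μ : Ω → ℝ) (x : Ω) : tvDist (M x) μ ≤ dmax M μ :=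
  le_ciSup (f := fun x => tvDist (M x) μ) (Set.finite_range _).bddAbove x

theorem dmax_nonneg (M : Matrix Ω Ω ℝ) (μ : Ω → ℝ) : 0 ≤ dmax M μ :=
  Real.iSup_nonneg fun x => by unfold tvDist; positivity

theorem sum_abs_le_dmax (M : Matrix Ω Ω ℝ) (μ : Ω → ℝ) (x : Ω) :
    ∑ y, |M x y - μ y| ≤ 2 * dmax M μ := by
  have := tv_le_dmax M μ x
  unfold tvDist at this; linarith

theorem test_le (M : Matrix Ω Ω ℝ) (μ : Ω → ℝ) {f : Ω → ℝ} {c : ℝ} (hf : ∀ x, |f x| ≤ c)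
    (x : Ω) : |(M *ᵥ f) x - mean μ f| ≤ 2 * dmax M μ * c := by
  have hc : 0 ≤ c := (abs_nonneg _).trans (hf x)
  have e : (M *ᵥ f) x - mean μ f = ∑ y, (M x y - μ y) * f y := by
    simp [mulVec, dotProduct, mean, sub_mul]
  rw [e]
  calc |∑ y, (M x y - μ y) * f y| ≤ ∑ y, |(M x y - μ y) * f y| := Finset.abs_sum_le_sum_abs _ _
    _ ≤ ∑ y, |M x y - μ y| * c := Finset.sum_le_sum fun y _ => by
        rw [abs_mul]; exact mul_le_mul_of_nonneg_left (hf y) (abs_nonneg _)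
    _ = (∑ y, |M x y - μ y|) * c := by rw [Finset.sum_mul]
    _ ≤ _ := mul_le_mul_of_nonneg_right (sum_abs_le_dmax M μ x) hc

theorem dmax_le [Nonempty Ω] {M : Matrix Ω Ω ℝ} {μ : Ω → ℝ} {c : ℝ}
    (h : ∀ (f : Ω → ℝ), (∀ x, |f x| ≤ 1) → ∀ x, (M *ᵥ f) x - mean μ f ≤ 2 * c) :
    dmax M μ ≤ c := by
  refine ciSup_le fun x => ?_
  have h1 := h (fun y => if 0 ≤ M x y - μ y then 1 else -1)
    (fun y => by split_ifs <;> simp) x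
  have e : (M *ᵥ (fun y => if 0 ≤ M x y - μ y then (1:ℝ) else -1)) x -
      mean μ (fun y => if 0 ≤ M x y - μ y then (1:ℝ) else -1) = ∑ y, |M x y - μ y| := by
    simp only [mulVec, dotProduct, mean]
    rw [← Finset.sum_sub_distrib]
    refine Finset.sum_congr rfl fun y _ => ?_
    split_ifs with hy
    · rw [abs_of_nonneg hy]; ring
    · rw [abs_of_neg (not_le.1 hy)]; ring
  rw [e] at h1
  unfold tvDist; linarith

theorem seq_bound {a b c : ℕ → ℝ} (hb : ∀ k, b k = a k - a (k + 1))
    (hc : ∀ k, c k = b k - b (k + 1)) (ha : ∀ k, 0 ≤ a k) (hb0 : ∀ k, 0 ≤ b k)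
    (hc0 : ∀ k, 0 ≤ c k)
    (hcm : Antitone c) (K : ℕ) : (K : ℝ) ^ 2 * c K ≤ 2 * a 0 := by
  have key : ∀ i j, i + j = K → (i : ℝ) * c K ≤ b j ∧ (i : ℝ) ^ 2 * c K ≤ 2 * a j := by
    intro i
    induction i with
    | zero => intro j _; simp [hb0, ha]
    | succ i ih =>
      intro j hj
      obtain ⟨h1, h2⟩ := ih (j + 1) (by omega)
      have h3 := hcm (show j ≤ K by omega)
      have h4 := hb j
      have h5 := hc j
      have h6 := hc0 K
      push_cast
      constructor
      · linarith
      · have : ((i:ℝ) + 1) * c K ≤ b j := by linarith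
        nlinarith
  exact (key K 0 (by omega)).2

theorem smoothing {μ : Ω → ℝ} {P : Matrix Ω Ω ℝ} (hμ : ∀ x, 0 ≤ μ x) (hP : IsStochastic P)
    (h : IsReversible P μ) {k : ℕ} (hk : 0 < k) (f : Ω → ℝ) :
    nrm μ ((P ^ k) *ᵥ (f - P *ᵥ (P *ᵥ f))) ≤ 2 / k * nrm μ f := by
  have hk' : (0:ℝ) < k := by exact_mod_cast hk
  have hs : ∀ k, (P ^ (k + 1)) *ᵥ f = P *ᵥ ((P ^ k) *ᵥ f) := fun k => by
    rw [pow_succ', mulVec_mulVec]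
  have hs' : ∀ k (g : Ω → ℝ), (P ^ (k + 1)) *ᵥ g = P *ᵥ ((P ^ k) *ᵥ g) := fun k g => by
    rw [pow_succ', mulVec_mulVec]
  have hcm : ∀ k (g : Ω → ℝ), (P ^ k) *ᵥ (P *ᵥ g) = P *ᵥ ((P ^ k) *ᵥ g) := fun k g => by
    rw [mulVec_mulVec, mulVec_mulVec, ← pow_succ, pow_succ']
  have key := seq_bound (a := fun k => nrm μ ((P ^ k) *ᵥ f) ^ 2)
    (b := fun k => nrm μ ((P ^ k) *ᵥ f) ^ 2 - nrm μ ((P ^ (k + 1)) *ᵥ f) ^ 2)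
    (c := fun k => nrm μ ((P ^ k) *ᵥ (f - P *ᵥ (P *ᵥ f))) ^ 2)
    (fun _ => rfl) (fun k => by
      simp only [hs, mulVec_sub, hcm]
      generalize (P ^ k) *ᵥ f = u
      have e : nrm μ (u - P *ᵥ (P *ᵥ u)) ^ 2 =
          nrm μ u ^ 2 - 2 * ip μ u (P *ᵥ (P *ᵥ u)) + nrm μ (P *ᵥ (P *ᵥ u)) ^ 2 := by
        rw [← inner_emb hμ]; unfold nrm; rw [map_sub]; exact norm_sub_sq_real _ _
      rw [e, ← ip_symm_of_rev h, ← nrm_sq hμ]; ring)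
    (fun k => sq_nonneg _)
    (fun k => by
      rw [sub_nonneg, hs]
      exact pow_le_pow_left₀ (nrm_nonneg _ _) (nrm_sto hμ hP h _) 2)
    (fun k => sq_nonneg _)
    (antitone_nat_of_succ_le fun k => by
      simp only [hs']
      exact pow_le_pow_left₀ (nrm_nonneg _ _) (nrm_sto hμ hP h _) 2) k
  simp only [pow_zero, one_mulVec] at key
  rw [div_mul_eq_mul_div, le_div_iff₀ hk']
  refine le_of_sq_le_sq ?_ (mul_nonneg zero_le_two (nrm_nonneg _ _))
  nlinarith [sq_nonneg (nrm μ f)]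

theorem nrm_heat_mean_zero {μ : Ω → ℝ} {P : Matrix Ω Ω ℝ} (hμ : ∀ x, 0 ≤ μ x)
    (h : IsReversible P μ) (t : ℝ) (g : Ω → ℝ) (hg : mean μ g = 0) :
    nrm μ (heat P t *ᵥ g) ≤ 2 * dmax (heat P t) μ * nrm μ g := by
  have hs := schur hμ (K := Matrix.of fun x y => heat P t x y - μ y)
    (c := 2 * dmax (heat P t) μ) (by have := dmax_nonneg (heat P t) μ; linarith)
    (fun x => sum_abs_le_dmax _ μ x)
    (fun x y => by simp only [of_apply, mul_sub]; rw [rev_heat h t x y]; ring) g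
  have e : (Matrix.of fun x y => heat P t x y - μ y) *ᵥ g = heat P t *ᵥ g := by
    ext x
    simp only [mulVec, dotProduct, of_apply, sub_mul, Finset.sum_sub_distrib]
    unfold mean at hg
    rw [hg, sub_zero]
  rwa [e] at hs

theorem halving {μ : Ω → ℝ} {P : Matrix Ω Ω ℝ} (hμ : ∀ x, 0 ≤ μ x)
    (h : IsReversible P μ) (j : ℕ) : ∀ (s : ℝ),
    (∀ g, mean μ g = 0 → nrm μ (heat P s *ᵥ g) ≤ (1 / 2) ^ (2 ^ j) * nrm μ g) →
    ∀ g, mean μ g = 0 → nrm μ (heat P (s / 2 ^ j) *ᵥ g) ≤ 1 / 2 * nrm μ g := by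
  induction j with
  | zero => intro s hs g hg; simpa using hs g hg
  | succ j ih =>
    intro s hs
    have h2 := ih (s / 2) (fun g hg => by
      refine le_of_sq_le_sq ?_ (mul_nonneg (by positivity) (nrm_nonneg _ _))
      rw [nrm_sq hμ, ip_symm_of_rev (rev_heat h _), mulVec_mulVec, ← heat_add, add_halves]
      calc ip μ g (heat P s *ᵥ g) ≤ nrm μ g * nrm μ (heat P s *ᵥ g) := ip_le hμ _ _
        _ ≤ nrm μ g * ((1 / 2) ^ (2 ^ (j + 1)) * nrm μ g) :=
          mul_le_mul_of_nonneg_left (hs g hg) (nrm_nonneg _ _)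
        _ = _ := by rw [pow_succ 2 j, pow_mul]; ring)
    have e : s / 2 / 2 ^ j = s / 2 ^ (j + 1) := by rw [div_div, pow_succ']
    rwa [e] at h2

theorem nrm_sub_heat {μ : Ω → ℝ} {P : Matrix Ω Ω ℝ} (hμ : ∀ x, 0 ≤ μ x) (hP : IsStochastic P)
    (h : IsReversible P μ) {s : ℝ} (hs : 0 ≤ s) (g : Ω → ℝ) :
    nrm μ (g - heat P s *ᵥ g) ≤ s * nrm μ (g - P *ᵥ g) := by
  have h1 : HasSum (fun k => pw s k • (g - (P ^ k) *ᵥ g)) (g - heat P s *ᵥ g) := by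
    rw [Pi.hasSum]
    intro x
    have := ((pw_hasSum s).mul_right (g x)).sub (heat_hasSum_mulVec P s g x)
    rw [one_mul] at this
    simpa [mul_sub] using this
  have h2 := (emb μ).toContinuousLinearMap.hasSum h1
  refine h2.norm_le_of_bounded ((pw_mean s).mul_right (nrm μ (g - P *ᵥ g))) fun k => ?_
  have hk : ∀ k : ℕ, nrm μ (g - (P ^ k) *ᵥ g) ≤ k * nrm μ (g - P *ᵥ g) := by
    intro k
    induction k with
    | zero => simp [nrm]
    | succ k ih =>
      have e : g - (P ^ (k + 1)) *ᵥ g = (g - (P ^ k) *ᵥ g) + (P ^ k) *ᵥ (g - P *ᵥ g) := by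
        rw [mulVec_sub, mulVec_mulVec, ← pow_succ]; abel
      rw [e]
      have h3 := nrm_add_le μ (g - (P ^ k) *ᵥ g) ((P ^ k) *ᵥ (g - P *ᵥ g))
      have h4 := nrm_sto_pow hμ hP h k (g - P *ᵥ g)
      push_cast; linarith
  have e : ‖(emb μ).toContinuousLinearMap (pw s k • (g - (P ^ k) *ᵥ g))‖ =
      nrm μ (pw s k • (g - (P ^ k) *ᵥ g)) := rfl
  have h5 := pw_nonneg hs k
  show ‖(emb μ).toContinuousLinearMap (pw s k • (g - (P ^ k) *ᵥ g))‖ ≤ _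
  rw [e, nrm_smul, abs_of_nonneg h5, mul_assoc]
  exact mul_le_mul_of_nonneg_left (hk k) h5

theorem gap {μ : Ω → ℝ} {P : Matrix Ω Ω ℝ} (hμ : ∀ x, 0 ≤ μ x) (hP : IsStochastic P)
    (h : IsReversible P μ) {T : ℝ} (hT : 0 ≤ T) (j : ℕ)
    (hd : 2 * dmax (heat P T) μ ≤ (1 / 2) ^ (2 ^ j)) (g : Ω → ℝ) (hg : mean μ g = 0) :
    2 ^ j * nrm μ g ≤ 2 * T * nrm μ (g - P *ᵥ g) := by
  have h1 := halving hμ h j T (fun g hg => (nrm_heat_mean_zero hμ h T g hg).trans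
    (mul_le_mul_of_nonneg_right hd (nrm_nonneg _ _))) g hg
  have h2 := nrm_sub_heat hμ hP h (s := T / 2 ^ j) (by positivity) g
  have h3 : nrm μ g ≤ nrm μ (g - heat P (T / 2 ^ j) *ᵥ g) + nrm μ (heat P (T / 2 ^ j) *ᵥ g) := by
    simpa using nrm_add_le μ (g - heat P (T / 2 ^ j) *ᵥ g) (heat P (T / 2 ^ j) *ᵥ g)
  have h4 : nrm μ g ≤ 2 * (T / 2 ^ j * nrm μ (g - P *ᵥ g)) := by linarith
  have h5 : (0:ℝ) < 2 ^ j := by positivity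
  calc 2 ^ j * nrm μ g ≤ 2 ^ j * (2 * (T / 2 ^ j * nrm μ (g - P *ᵥ g))) :=
        mul_le_mul_of_nonneg_left h4 h5.le
    _ = _ := by field_simp

/-- survival probabilities: `surv P G m x` is the probability that the chain from `x`
avoids `G` up to time `m`. -/
noncomputable def surv (P : Matrix Ω Ω ℝ) (G : Finset Ω) : ℕ → Ω → ℝ
  | 0 => fun x => if x ∈ G then 0 else 1
  | m + 1 => fun x => if x ∈ G then 0 else (P *ᵥ surv P G m) x

/-- indicator of `G`. -/
noncomputable def ind (G : Finset Ω) : Ω → ℝ := fun x => if x ∈ G then 1 else 0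

theorem surv_mem {P : Matrix Ω Ω ℝ} {G : Finset Ω} (m : ℕ) {x : Ω} (hx : x ∈ G) :
    surv P G m x = 0 := by
  cases m <;> simp [surv, hx]

theorem surv_bdd {P : Matrix Ω Ω ℝ} (hP : IsStochastic P) (G : Finset Ω) (m : ℕ) :
    ∀ x, 0 ≤ surv P G m x ∧ surv P G m x ≤ 1 := by
  induction m with
  | zero => intro x; simp only [surv]; split_ifs <;> simp
  | succ m ih =>
    intro x
    simp only [surv]
    split_ifs
    · simp
    · have h1 := sto_mono hP (f := fun _ => 0) (fun y => (ih y).1) x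
      have h2 := sto_mono hP (g := fun _ => 1) (fun y => (ih y).2) x
      rw [sto_const hP] at h1 h2
      exact ⟨h1, h2⟩

theorem surv_anti {P : Matrix Ω Ω ℝ} (hP : IsStochastic P) (G : Finset Ω) (x : Ω) :
    Antitone (fun m => surv P G m x) := by
  have : ∀ m x, surv P G (m + 1) x ≤ surv P G m x := by
    intro m
    induction m with
    | zero =>
      intro x
      by_cases hx : x ∈ G
      · rw [surv_mem _ hx, surv_mem _ hx]
      · have := (surv_bdd hP G 1 x).2
        simpa [surv, hx] using this
    | succ m ih =>
      intro x
      by_cases hx : x ∈ G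
      · rw [surv_mem _ hx, surv_mem _ hx]
      · have := sto_mono hP ih x
        simpa [surv, hx] using this
  exact antitone_nat_of_succ_le fun m => this m x

theorem surv_hit {P : Matrix Ω Ω ℝ} (hP : IsStochastic P) (G : Finset Ω) (k : ℕ) :
    ∀ x, ((P ^ k) *ᵥ ind G) x ≤ 1 - surv P G k x := by
  have hi : ∀ x, |ind G x| ≤ 1 := fun x => by unfold ind; split_ifs <;> simp
  induction k with
  | zero => intro x; simp only [pow_zero, one_mulVec, ind, surv]; split_ifs <;> simp
  | succ k ih =>
    intro x
    by_cases hx : x ∈ G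
    · rw [surv_mem _ hx, sub_zero]
      exact (abs_le.1 (sto_pow_abs hP hi _ x)).2
    · rw [pow_succ', ← mulVec_mulVec]
      have h1 := sto_mono hP ih x
      have e : (fun x => 1 - surv P G k x) = (fun _ => 1) - surv P G k := rfl
      rw [e, mulVec_sub, sto_const hP] at h1
      simpa [surv, hx] using h1

theorem surv_bound {P : Matrix Ω Ω ℝ} (hP : IsStochastic P) (G : Finset Ω) {t : ℝ}
    (ht : 0 ≤ t) {m : ℕ} (hm : t < m) (x : Ω) :
    surv P G m x * (1 - t / (m - t) ^ 2) ≤ 1 - (heat P t *ᵥ ind G) x := by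
  have hmt : 0 < (m:ℝ) - t := by linarith
  have h1 := (pw_hasSum t).sub (heat_hasSum_mulVec P t (ind G) x)
  have h2 := ((pw_hasSum t).sub ((pw_var t).div_const ((m - t) ^ 2))).mul_left (surv P G m x)
  refine hasSum_le (fun k => ?_) h2 h1
  have h3 := surv_hit hP G k x
  have h4 := pw_nonneg ht k
  have h5 := (surv_bdd hP G m x).1
  have h6 := (surv_bdd hP G k x).1
  have e : surv P G m x * (pw t k - pw t k * (k - t) ^ 2 / (m - t) ^ 2) =
      pw t k * (surv P G m x * (1 - (k - t) ^ 2 / (m - t) ^ 2)) := by ring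
  have e2 : pw t k - pw t k * ((P ^ k) *ᵥ ind G) x = pw t k * (1 - ((P ^ k) *ᵥ ind G) x) := by
    ring
  rw [e, e2]
  refine mul_le_mul_of_nonneg_left ?_ h4
  refine le_trans ?_ (show surv P G k x ≤ _ by linarith)
  rcases le_total k m with hk | hk
  · have h7 := surv_anti hP G x hk
    simp only at h7
    have : 0 ≤ ((k:ℝ) - t) ^ 2 / (m - t) ^ 2 := by positivity
    nlinarith
  · have hk' : (m:ℝ) ≤ k := by exact_mod_cast hk
    have : 1 ≤ ((k:ℝ) - t) ^ 2 / (m - t) ^ 2 := by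
      rw [one_le_div (by positivity)]
      exact pow_le_pow_left₀ hmt.le (by linarith) 2
    nlinarith

theorem surv_good {P : Matrix Ω Ω ℝ} (hP : IsStochastic P) (G : Finset Ω) {g : ℕ → Ω → ℝ}
    (hg : ∀ k, g (k + 1) = P *ᵥ g k) {s : ℕ} {η C : ℝ} (hη : 0 ≤ η) (hb : ∀ x, |g s x| ≤ C) (m : ℕ) :
    (∀ k, s ≤ k → k ≤ s + m → ∀ y ∈ G, |g k y| ≤ η) →
    ∀ x, |g (s + m) x| ≤ η + C * surv P G m x := by
  induction m with
  | zero =>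
    intro hG x
    by_cases hx : x ∈ G
    · rw [surv_mem _ hx]; simpa using hG s le_rfl (by omega) x hx
    · have := hb x
      simp only [surv, hx, add_zero, if_false, mul_one]; linarith
  | succ m ih =>
    intro hG x
    have ih' := ih (fun k h1 h2 => hG k h1 (by omega))
    by_cases hx : x ∈ G
    · rw [surv_mem _ hx]; simpa using hG (s + (m + 1)) (by omega) le_rfl x hx
    · have e : P *ᵥ (fun x => η + C * surv P G m x) = (fun x => η + C * (P *ᵥ surv P G m) x) := by
        have : (fun x => η + C * surv P G m x) = (fun _ => η) + C • surv P G m := rfl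
        rw [this, mulVec_add, sto_const hP, mulVec_smul]; rfl
      have h1 := sto_mono hP (fun y => (abs_le.1 (ih' y)).2) x
      have h2 := sto_mono hP (fun y => (show -g (s + m) y ≤ η + C * surv P G m y by
        linarith [(abs_le.1 (ih' y)).1])) x
      have e3 : (P *ᵥ fun y => -g (s + m) y) x = -(P *ᵥ g (s + m)) x := by
        have : (fun y => -g (s + m) y) = - g (s + m) := rfl
        rw [this, mulVec_neg]; rfl
      rw [e3] at h2
      rw [e] at h1 h2
      rw [← add_assoc, hg]
      simp only [surv, hx, if_false]
      rw [abs_le]; constructor <;> linarith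

theorem maximal {μ : Ω → ℝ} (hμ : ∀ x, 0 ≤ μ x) {g : ℕ → Ω → ℝ} {s : ℕ} {D E : ℝ}
    (hD0 : 0 ≤ D) (hE0 : 0 ≤ E)
    (hD : ∀ k, s ≤ k → nrm μ (g (k + 1) - g k) ≤ D) (hE : ∀ k, s ≤ k → nrm μ (g k) ≤ E)
    (n : ℕ) : ∃ W : Ω → ℝ, (∀ k, s ≤ k → k ≤ s + n → ∀ x, g k x ^ 2 ≤ W x) ∧
      (∀ x, g (s + n) x ^ 2 ≤ W x) ∧ mean μ W ≤ E ^ 2 + n * (D * (2 * E)) := by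
  induction n with
  | zero =>
    refine ⟨fun x => g s x ^ 2, ?_, by simp, ?_⟩
    · intro k h1 h2 x
      have : k = s := by omega
      rw [this]
    · have : mean μ (fun x => g s x ^ 2) = nrm μ (g s) ^ 2 := by
        rw [nrm_sq hμ]; simp [mean, ip, sq]
      rw [this]; simpa using pow_le_pow_left₀ (nrm_nonneg _ _) (hE s le_rfl) 2
  | succ n ih =>
    obtain ⟨W, h1, h2, h3⟩ := ih
    set u := g (s + n + 1) - g (s + n) with hu
    set v := g (s + n + 1) + g (s + n) with hv
    have h4 : ∀ x, g (s + n + 1) x ^ 2 ≤ W x + |u x| * |v x| := by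
      intro x
      have : g (s + n + 1) x ^ 2 = g (s + n) x ^ 2 + u x * v x := by
        simp only [hu, hv, Pi.sub_apply, Pi.add_apply]; ring
      rw [this, ← abs_mul]
      linarith [h2 x, le_abs_self (u x * v x)]
    refine ⟨fun x => W x + |u x| * |v x|, ?_, h4, ?_⟩
    · intro k hk1 hk2 x
      rcases Nat.lt_or_ge k (s + n + 1) with hk | hk
      · have := h1 k hk1 (by omega) x
        have : 0 ≤ |u x| * |v x| := by positivity
        linarith
      · have : k = s + n + 1 := by omega
        rw [this]; exact h4 x
    · have h5 : mean μ (fun x => W x + |u x| * |v x|) =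
          mean μ W + ip μ (fun x => |u x|) (fun x => |v x|) := by
        simp [mean, ip, mul_add, Finset.sum_add_distrib]
      have h6 := ip_le hμ (fun x => |u x|) (fun x => |v x|)
      rw [nrm_abs hμ, nrm_abs hμ] at h6
      have h7 : nrm μ u ≤ D := hD (s + n) (by omega)
      have h8 : nrm μ v ≤ 2 * E := by
        have := nrm_add_le μ (g (s + n + 1)) (g (s + n))
        have h9 := hE (s + n + 1) (by omega)
        have h10 := hE (s + n) (by omega)
        linarith
      have h11 := mul_le_mul h7 h8 (nrm_nonneg _ _) hD0
      rw [h5]; push_cast; linarith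

end core

set_option linter.unusedSectionVars false

section main
variable {Ω : Type*} [Fintype Ω] [DecidableEq Ω]

theorem diff_form {P B : Matrix Ω Ω ℝ} (hcomm : Commute P B) (k : ℕ) (f : Ω → ℝ) :
    (P ^ k) *ᵥ (B *ᵥ f) - (P ^ (k + 1)) *ᵥ (B *ᵥ f) = (P ^ k) *ᵥ (B *ᵥ (f - P *ᵥ f)) := by
  have h : B *ᵥ (P *ᵥ f) = P *ᵥ (B *ᵥ f) := by
    rw [mulVec_mulVec, mulVec_mulVec, hcomm.eq]
  rw [mulVec_sub B, mulVec_sub (P ^ k), h, mulVec_mulVec (B *ᵥ f) (P ^ k) P, ← pow_succ]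

set_option maxHeartbeats 2000000 in
theorem hard_core [Nonempty Ω] {μ : Ω → ℝ} {P B : Matrix Ω Ω ℝ} (hμ : IsProbVec μ)
    (hP : IsStochastic P) (hrev : IsReversible P μ) (hst : μ ᵥ* P = μ)
    (hB : IsStochastic B) (hBst : μ ᵥ* B = μ) (hcomm : Commute P B)
    (hsm : ∀ k : ℕ, 0 < k → ∀ f, nrm μ ((P ^ k) *ᵥ (B *ᵥ (f - P *ᵥ f))) ≤ 2 / k * nrm μ f)
    {δ η T : ℝ} (hδ0 : 0 < δ) (hδ1 : δ ≤ 1) (hη0 : 0 < η) (hη1 : η ≤ 1) {j : ℕ}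
    (hj : 64000 / (δ ^ 2 * η ^ 3) ≤ 2 ^ j) (hT : 8 / δ ^ 2 ≤ T)
    (hd1 : 2 * dmax (heat P T) μ ≤ (1 / 2) ^ (2 ^ j)) (hd2 : dmax (heat P T) μ ≤ η / 40)
    {t0 : ℕ} (ht1 : (1 + δ) * T ≤ t0) (ht2 : t0 ≤ 3 * T) :
    dmax (P ^ t0 * B) μ ≤ η := by
  have hT1 : 8 ≤ T * δ ^ 2 := by rwa [div_le_iff₀ (by positivity)] at hT
  have hT0 : 0 < T := by
    by_contra hcon
    have : T * δ ^ 2 ≤ 0 := mul_nonpos_of_nonpos_of_nonneg (not_lt.1 hcon) (sq_nonneg δ)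
    linarith
  have hδT : 8 ≤ δ * T := by
    have h1 : T * δ ^ 2 = δ * (δ * T) := by ring
    have h2 : δ * (δ * T) ≤ 1 * (δ * T) := mul_le_mul_of_nonneg_right hδ1 (by positivity)
    linarith
  obtain ⟨s, hs1, hs2⟩ : ∃ s : ℕ, δ * T / 4 ≤ s ∧ (s:ℝ) ≤ δ * T / 2 := by
    refine ⟨⌈δ * T / 4⌉₊, Nat.le_ceil _, ?_⟩
    have := Nat.ceil_lt_add_one (show 0 ≤ δ * T / 4 by positivity)
    linarith
  have hs0' : (0:ℝ) < s := by linarith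
  have hs0 : 0 < s := by exact_mod_cast hs0'
  have hst0 : s ≤ t0 := by
    have : (s:ℝ) ≤ t0 := by linarith
    exact_mod_cast this
  obtain ⟨m, rfl⟩ : ∃ m, t0 = s + m := ⟨t0 - s, by omega⟩
  push_cast at ht1 ht2
  refine dmax_le fun f hf x => ?_
  set f0 : Ω → ℝ := f - fun _ => mean μ f with hf0
  have hf0b : ∀ x, |f0 x| ≤ 2 := fun x => by
    have h1 := mean_abs_le hμ hf
    have h2 := abs_sub (f x) (mean μ f)
    have h3 := hf x
    simp only [hf0, Pi.sub_apply]; linarith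
  have hf0m : mean μ f0 = 0 := by rw [hf0, mean_sub, mean_const hμ, sub_self]
  have hf0n : nrm μ f0 ≤ 2 := nrm_le_of_bdd hμ zero_le_two hf0b
  set g : ℕ → Ω → ℝ := fun k => (P ^ k) *ᵥ (B *ᵥ f0) with hg
  have hgs : ∀ k, g (k + 1) = P *ᵥ g k := fun k => by
    simp only [hg]; rw [pow_succ', ← mulVec_mulVec]
  have hgd : ∀ k, g k - g (k + 1) = (P ^ k) *ᵥ (B *ᵥ (f0 - P *ᵥ f0)) := fun k =>
    diff_form hcomm k f0
  have hgdn : ∀ k, s ≤ k → nrm μ (g k - g (k + 1)) ≤ 4 / s := fun k hk => by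
    have hk' : (s:ℝ) ≤ k := by exact_mod_cast hk
    rw [hgd]
    calc _ ≤ 2 / k * nrm μ f0 := hsm k (by omega) f0
      _ ≤ 2 / s * 2 := by
        refine mul_le_mul ?_ hf0n (nrm_nonneg _ _) (by positivity)
        exact div_le_div_of_nonneg_left zero_le_two hs0' hk'
      _ = 4 / s := by ring
  have hgm : ∀ k, mean μ (g k) = 0 := fun k => by
    simp only [hg]; rw [mean_pow hst, mean_mulVec hBst, hf0m]
  set R : ℝ := 2 ^ j with hR
  have hR0 : 0 < R := by positivity
  have hds : 4 / (s:ℝ) ≤ 16 / (δ * T) := by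
    rw [div_le_div_iff₀ hs0' (by positivity)]; linarith
  have hgn : ∀ k, s ≤ k → nrm μ (g k) ≤ 32 / (R * δ) := fun k hk => by
    have h1 := gap hμ.1 hP hrev hT0.le j hd1 (g k) (hgm k)
    rw [← hgs] at h1
    have h2 := (hgdn k hk).trans hds
    have h3 : R * nrm μ (g k) ≤ 2 * T * (16 / (δ * T)) :=
      h1.trans (mul_le_mul_of_nonneg_left h2 (by positivity))
    have h4 : 2 * T * (16 / (δ * T)) = 32 / δ := by field_simp; norm_num
    rw [h4] at h3
    rw [← div_div, div_right_comm, le_div_iff₀ hR0]; linarith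
  set E : ℝ := 32 / (R * δ) with hE
  have hE0 : 0 ≤ E := by positivity
  obtain ⟨W, hW1, -, hW3⟩ := maximal hμ.1 (D := 16 / (δ * T)) (E := E) (by positivity) hE0
    (fun k hk => by
      have := (hgdn k hk).trans hds
      rwa [← nrm_neg, neg_sub]) hgn m
  have hEδ : E / δ ≤ η ^ 3 / 2000 := by
    rw [hE, div_div, div_le_div_iff₀ (by positivity) (by norm_num)]
    rw [div_le_iff₀ (by positivity)] at hj
    linarith
  have hEE : E ≤ E / δ := by
    rw [le_div_iff₀ hδ0]; exact mul_le_of_le_one_right hE0 hδ1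
  have hη3 : η ^ 3 ≤ 1 := pow_le_one₀ hη0.le hη1
  have hE2 : E ^ 2 ≤ E / δ := by nlinarith
  have hWm : mean μ W ≤ η ^ 3 / 20 := by
    have h1 : (m:ℝ) * (16 / (δ * T) * (2 * E)) ≤ 3 * T * (16 / (δ * T) * (2 * E)) :=
      mul_le_mul_of_nonneg_right (by linarith) (by positivity)
    have h2 : 3 * T * (16 / (δ * T) * (2 * E)) = 96 * (E / δ) := by field_simp; ring
    have h3 : 0 ≤ η ^ 3 := by positivity
    linarith
  have hW0 : ∀ x, 0 ≤ W x := fun x => (sq_nonneg _).trans (hW1 s le_rfl (by omega) x)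
  set G : Finset Ω := Finset.univ.filter fun x => W x ≤ η ^ 2 with hG
  have hGm : 1 - mean μ (ind G) ≤ η / 20 := by
    have h1 : mean μ (fun x => 1 - ind G x) ≤ mean μ (fun x => W x / η ^ 2) := by
      refine mean_mono hμ fun x => ?_
      by_cases hx : W x ≤ η ^ 2
      · have : 0 ≤ W x / η ^ 2 := div_nonneg (hW0 x) (by positivity)
        simpa [ind, hG, hx] using this
      · have : 1 ≤ W x / η ^ 2 := by
          rw [one_le_div (by positivity)]; exact (not_le.1 hx).le
        simpa [ind, hG, hx] using this
    have h2 : mean μ (fun x => 1 - ind G x) = 1 - mean μ (ind G) := by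
      have := mean_sub μ (fun _ => 1) (ind G)
      rw [mean_const hμ] at this; exact this
    have h3 : mean μ (fun x => W x / η ^ 2) = mean μ W / η ^ 2 := by
      simp only [mean, Finset.sum_div]
      exact Finset.sum_congr rfl fun x _ => by ring
    rw [← h2]
    refine h1.trans ?_
    rw [h3, div_le_iff₀ (by positivity)]
    linarith
  have hind : ∀ x, |ind G x| ≤ 1 := fun x => by unfold ind; split_ifs <;> simp
  have hgood := surv_good hP G hgs (s := s) (η := η) (C := 2) hη0.le
    (sto_pow_abs hP (sto_abs hB hf0b) s) m (fun k hk1 hk2 y hy => by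
      have h1 := hW1 k hk1 hk2 y
      have h2 : W y ≤ η ^ 2 := by simpa [hG] using hy
      exact abs_le_of_sq_le_sq (h1.trans h2) hη0.le) x
  have hmT : δ * T / 2 ≤ m - T := by linarith
  have hsv := surv_bound hP G hT0.le (m := m) (by linarith) x
  have hfac : T / (m - T) ^ 2 ≤ 1 / 2 := by
    rw [div_le_iff₀ (pow_pos (by linarith) 2)]
    have h1 : (δ * T / 2) ^ 2 ≤ ((m:ℝ) - T) ^ 2 := pow_le_pow_left₀ (by positivity) hmT 2
    have h2 : (δ * T / 2) ^ 2 = (T * δ ^ 2) * T / 4 := by ring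
    have h3 : 8 * T ≤ (T * δ ^ 2) * T := mul_le_mul_of_nonneg_right hT1 hT0.le
    linarith
  have htest := (abs_le.1 (test_le (heat P T) μ hind x)).1
  have hsv0 := (surv_bdd hP G m x).1
  have hsurv : surv P G m x ≤ η / 5 := by
    have h1 : surv P G m x * (1 / 2) ≤ surv P G m x * (1 - T / (m - T) ^ 2) :=
      mul_le_mul_of_nonneg_left (by linarith) hsv0
    linarith
  have hfin : ((P ^ (s + m) * B) *ᵥ f) x - mean μ f = g (s + m) x := by
    simp only [hg, hf0]
    rw [mulVec_sub, mulVec_sub, sto_const hB, sto_pow_const hP, mulVec_mulVec]; rfl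
  rw [hfin]
  linarith [le_abs_self (g (s + m) x)]

theorem dmax_anti [Nonempty Ω] {μ : Ω → ℝ} {P B : Matrix Ω Ω ℝ}
    (hP : IsStochastic P) : Antitone fun k => dmax (P ^ k * B) μ := by
  refine antitone_nat_of_succ_le fun k => dmax_le fun f hf x => ?_
  have h1 := fun x => (abs_le.1 (test_le (P ^ k * B) μ hf x)).2
  have h2 := sto_mono hP (f := (P ^ k * B) *ᵥ f) (g := fun _ => 2 * dmax (P ^ k * B) μ + mean μ f)
    (fun y => by linarith [h1 y]) x
  rw [sto_const hP, mulVec_mulVec, ← mul_assoc, ← pow_succ'] at h2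
  linarith

theorem easy_core [Nonempty Ω] {μ : Ω → ℝ} {P B : Matrix Ω Ω ℝ} (hμ : IsProbVec μ)
    (hP : IsStochastic P) (hB : IsStochastic B) {t : ℝ} {m : ℕ} (hm : m < t) :
    dmax (heat P t * B) μ ≤ dmax (P ^ m * B) μ + t / (t - m) ^ 2 := by
  refine dmax_le fun f hf x => ?_
  have ht : 0 ≤ t := (Nat.cast_nonneg m).trans hm.le
  have htm : 0 < t - m := by linarith
  have h1 := (heat_hasSum_mulVec P t (B *ᵥ f) x).sub ((pw_hasSum t).mul_right (mean μ f))
  rw [one_mul, mulVec_mulVec] at h1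
  have h2 := ((pw_hasSum t).mul_right (2 * dmax (P ^ m * B) μ)).add
    (((pw_var t).div_const ((t - m) ^ 2)).mul_left 2)
  have h3 := hasSum_le (fun k => ?_) h1 h2
  · linarith
  · have hd := dmax_nonneg (P ^ m * B) μ
    have e1 : pw t k * ((P ^ k) *ᵥ (B *ᵥ f)) x - pw t k * mean μ f =
      pw t k * (((P ^ k * B) *ᵥ f) x - mean μ f) := by rw [mulVec_mulVec]; ring
    have e2 : pw t k * (2 * dmax (P ^ m * B) μ) + 2 * (pw t k * (k - t) ^ 2 / (t - m) ^ 2) =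
      pw t k * (2 * dmax (P ^ m * B) μ + 2 * ((k - t) ^ 2 / (t - m) ^ 2)) := by ring
    rw [e1, e2]
    refine mul_le_mul_of_nonneg_left ?_ (pw_nonneg ht k)
    rcases le_total m k with hk | hk
    · have h4 := dmax_anti (μ := μ) (B := B) hP hk
      have h5 := (abs_le.1 (test_le (P ^ k * B) μ hf x)).2
      have h6 : 0 ≤ ((k:ℝ) - t) ^ 2 / (t - m) ^ 2 := by positivity
      simp only at h4
      linarith
    · have hk' : (k:ℝ) ≤ m := by exact_mod_cast hk
      have h4 := (abs_le.1 (sto_pow_abs hP (sto_abs hB hf) k x)).2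
      rw [mulVec_mulVec] at h4
      have h5 := (abs_le.1 (mean_abs_le hμ hf)).1
      have h6 : 1 ≤ ((k:ℝ) - t) ^ 2 / (t - m) ^ 2 := by
        rw [one_le_div (by positivity), ← neg_sq ((k:ℝ) - t)]
        exact pow_le_pow_left₀ htm.le (by linarith) 2
      linarith

theorem lazy_mulVec (P : Matrix Ω Ω ℝ) (f : Ω → ℝ) :
    lazyM P *ᵥ f = (2:ℝ)⁻¹ • (f + P *ᵥ f) := by
  rw [lazyM, smul_mulVec, add_mulVec, one_mulVec]

theorem heat_smooth {P : Matrix Ω Ω ℝ} (hP : IsStochastic P) {t l : ℝ} (ht : 0 < t) (hl : 0 < l)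
    {f : Ω → ℝ} (hf : ∀ x, |f x| ≤ 1) (x : Ω) :
    (heat P t *ᵥ (f - P *ᵥ f)) x ≤ l / 2 + 1 / (2 * l * t) := by
  have h0 : HasSum (fun k => pw t k * ((P ^ (k + 1)) *ᵥ f) x) ((heat P t *ᵥ (P *ᵥ f)) x) := by
    have := heat_hasSum_mulVec P t (P *ᵥ f) x
    simpa only [mulVec_mulVec, ← pow_succ] using this
  have h1 := (pw_shift (a := fun k => ((P ^ k) *ᵥ f) x) h0).mul_left t⁻¹
  rw [inv_mul_cancel_left₀ ht.ne'] at h1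
  have h2 := (heat_hasSum_mulVec P t f x).sub h1
  have h3 := ((pw_hasSum t).mul_right (l / 2)).add ((pw_var t).mul_left (1 / (2 * l * t ^ 2)))
  have h4 := hasSum_le (fun k => ?_) h2 h3
  · rw [mulVec_sub]
    have e : 1 / (2 * l * t ^ 2) * t = 1 / (2 * l * t) := by field_simp
    rw [e, one_mul] at h4
    exact h4
  · set w := ((P ^ k) *ᵥ f) x with hw
    have hwb : |w| ≤ 1 := sto_pow_abs hP hf k x
    have e1 : pw t k * w - t⁻¹ * (pw t k * (k * w)) = pw t k * ((1 - k / t) * w) := by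
      field_simp
    have e2 : pw t k * (l / 2) + 1 / (2 * l * t ^ 2) * (pw t k * (k - t) ^ 2) =
        pw t k * (l / 2 + (1 - k / t) ^ 2 / (2 * l)) := by
      field_simp; ring
    rw [e1, e2]
    refine mul_le_mul_of_nonneg_left ?_ (pw_nonneg ht.le k)
    set a := 1 - (k:ℝ) / t
    have h5 : a * w ≤ |a| := by
      calc a * w ≤ |a * w| := le_abs_self _
        _ = |a| * |w| := abs_mul _ _
        _ ≤ |a| * 1 := mul_le_mul_of_nonneg_left hwb (abs_nonneg _)
        _ = |a| := mul_one _
    refine h5.trans ?_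
    have h6 : l / 2 + a ^ 2 / (2 * l) - |a| = (l - |a|) ^ 2 / (2 * l) := by
      rw [← sq_abs a]; field_simp; ring
    have h7 : 0 ≤ (l - |a|) ^ 2 / (2 * l) := by positivity
    linarith

theorem heat_le_heat_lazy [Nonempty Ω] {μ : Ω → ℝ} {P : Matrix Ω Ω ℝ}
    (hP : IsStochastic P) {t l : ℝ} (hl : 0 < l) (ht : 1 ≤ l ^ 2 * t) :
    dmax (heat P t) μ ≤ dmax (heat P t * lazyM P) μ + l := by
  have ht0 : 0 < t := by
    by_contra hcon
    have := mul_nonpos_of_nonneg_of_nonpos (sq_nonneg l) (not_lt.1 hcon)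
    linarith
  refine dmax_le fun f hf x => ?_
  have h1 := (abs_le.1 (test_le (heat P t * lazyM P) μ hf x)).2
  have h2 := heat_smooth hP ht0 hl hf x
  have e : f = lazyM P *ᵥ f + (2:ℝ)⁻¹ • (f - P *ᵥ f) := by
    rw [lazy_mulVec]; ext y; simp; ring
  have e2 : (heat P t *ᵥ f) x = ((heat P t * lazyM P) *ᵥ f) x +
      2⁻¹ * (heat P t *ᵥ (f - P *ᵥ f)) x := by
    conv_lhs => rw [e]
    rw [mulVec_add, mulVec_smul, mulVec_mulVec]; rfl
  have h3 : 1 / (2 * l * t) ≤ l / 2 := by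
    rw [div_le_div_iff₀ (by positivity) (by positivity)]; nlinarith
  rw [e2]; linarith

theorem lazy_sto {P : Matrix Ω Ω ℝ} (hP : IsStochastic P) : IsStochastic (lazyM P) := by
  constructor
  · intro x y
    have h1 := hP.1 x y
    have h2 : (0:ℝ) ≤ (1 : Matrix Ω Ω ℝ) x y := by
      rw [Matrix.one_apply]; split_ifs <;> simp
    simp only [lazyM, Matrix.smul_apply, Matrix.add_apply, smul_eq_mul]; positivity
  · intro x
    simp only [lazyM, Matrix.smul_apply, Matrix.add_apply, smul_eq_mul]
    rw [← Finset.mul_sum, Finset.sum_add_distrib, hP.2]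
    simp [Matrix.one_apply]; norm_num

theorem lazy_rev {μ : Ω → ℝ} {P : Matrix Ω Ω ℝ} (h : IsReversible P μ) :
    IsReversible (lazyM P) μ := by
  intro x y
  have h1 := h x y
  have h2 := rev_pow h 0 x y
  rw [pow_zero] at h2
  simp only [lazyM, Matrix.smul_apply, Matrix.add_apply, smul_eq_mul]; linarith

theorem lazy_st {μ : Ω → ℝ} {P : Matrix Ω Ω ℝ} (h : μ ᵥ* P = μ) : μ ᵥ* lazyM P = μ := by
  rw [lazyM, vecMul_smul, vecMul_add, vecMul_one, h]; ext x; simp; ring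

theorem one_sto : IsStochastic (1 : Matrix Ω Ω ℝ) := by
  constructor
  · intro x y; rw [Matrix.one_apply]; split_ifs <;> simp
  · intro x; simp [Matrix.one_apply]

theorem lazy_comm (P : Matrix Ω Ω ℝ) : Commute P (lazyM P) := by
  unfold lazyM
  exact ((Commute.one_right P).add_right (Commute.refl P)).smul_right _

theorem smooth_ave {μ : Ω → ℝ} {P : Matrix Ω Ω ℝ} (hμ : ∀ x, 0 ≤ μ x) (hP : IsStochastic P)
    (h : IsReversible P μ) (k : ℕ) (hk : 0 < k) (f : Ω → ℝ) :
    nrm μ ((P ^ k) *ᵥ (lazyM P *ᵥ (f - P *ᵥ f))) ≤ 2 / k * nrm μ f := by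
  have e : lazyM P *ᵥ (f - P *ᵥ f) = (2:ℝ)⁻¹ • (f - P *ᵥ (P *ᵥ f)) := by
    rw [lazy_mulVec, mulVec_sub]; congr 1; abel
  rw [e, mulVec_smul, nrm_smul]
  have h1 := smoothing hμ hP h hk f
  have h2 := nrm_nonneg μ ((P ^ k) *ᵥ (f - P *ᵥ (P *ᵥ f)))
  have h3 : |(2:ℝ)⁻¹| = 1 / 2 := by rw [abs_of_pos (by norm_num)]; norm_num
  rw [h3]; linarith

theorem smooth_lazy {μ : Ω → ℝ} {P : Matrix Ω Ω ℝ} (hμ : ∀ x, 0 ≤ μ x) (hP : IsStochastic P)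
    (h : IsReversible P μ) (k : ℕ) (hk : 0 < k) (f : Ω → ℝ) :
    nrm μ ((lazyM P ^ k) *ᵥ ((1 : Matrix Ω Ω ℝ) *ᵥ (f - lazyM P *ᵥ f))) ≤ 2 / k * nrm μ f := by
  rw [one_mulVec]
  refine le_trans ?_ (smoothing hμ (lazy_sto hP) (lazy_rev h) hk f)
  set v := (lazyM P ^ k) *ᵥ (f - lazyM P *ᵥ f) with hv
  have e : (lazyM P ^ k) *ᵥ (f - lazyM P *ᵥ (lazyM P *ᵥ f)) = v + lazyM P *ᵥ v := by
    have hc : ∀ w, lazyM P *ᵥ ((lazyM P ^ k) *ᵥ w) = (lazyM P ^ k) *ᵥ (lazyM P *ᵥ w) := fun w => by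
      rw [mulVec_mulVec, mulVec_mulVec, ← pow_succ', pow_succ]
    rw [hv, hc, ← mulVec_add]
    congr 1; rw [mulVec_sub (lazyM P)]; abel
  rw [e]
  refine le_of_sq_le_sq ?_ (nrm_nonneg _ _)
  have e2 : nrm μ (v + lazyM P *ᵥ v) ^ 2 =
      nrm μ v ^ 2 + 2 * ip μ v (lazyM P *ᵥ v) + nrm μ (lazyM P *ᵥ v) ^ 2 := by
    rw [← inner_emb hμ]; unfold nrm; rw [map_add]; exact norm_add_sq_real _ _
  have e3 : ip μ v (lazyM P *ᵥ v) = (nrm μ v ^ 2 - ip μ v (-(P *ᵥ v))) / 2 := by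
    rw [lazy_mulVec, nrm_sq hμ]
    simp only [ip, ← Finset.sum_sub_distrib, Finset.sum_div]
    refine Finset.sum_congr rfl fun x _ => ?_
    simp; ring
  have h1 := ip_le hμ v (-(P *ᵥ v))
  rw [nrm_neg] at h1
  have h2 := nrm_sto hμ hP h v
  have h3 := nrm_nonneg μ v
  have h4 : nrm μ v * nrm μ (P *ᵥ v) ≤ nrm μ v ^ 2 := by
    rw [sq]; exact mul_le_mul_of_nonneg_left h2 h3
  rw [e2, e3]
  nlinarith [sq_nonneg (nrm μ (lazyM P *ᵥ v))]

/-- lower bound on the speed of convergence. -/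
theorem dmax_zero_le [Nonempty Ω] {μ : Ω → ℝ} {P : Matrix Ω Ω ℝ}
    (hP : IsStochastic P) (hst : μ ᵥ* P = μ) {t : ℝ} (ht : 0 ≤ t) :
    dmax (heat P 0) μ ≤ dmax (heat P t) μ * Real.exp (2 * t) := by
  refine dmax_le fun f hf x => ?_
  set w := heat P (-t) *ᵥ f with hw
  have hwb : ∀ y, |w y| ≤ Real.exp (2 * t) := fun y => by
    have h1 := heat_hasSum_mulVec P (-t) f y
    have h2 := (pw_hasSum t).mul_right (Real.exp (2 * t))
    rw [one_mul] at h2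
    have := h1.norm_le_of_bounded h2 fun k => ?_
    · simpa using this
    · rw [Real.norm_eq_abs, abs_mul]
      have h3 : |pw (-t) k| = pw t k * Real.exp (2 * t) := by
        unfold pw
        rw [abs_div, abs_mul, abs_pow, abs_neg, abs_of_nonneg ht, abs_of_pos (Real.exp_pos _),
          Nat.abs_cast, neg_neg]
        have : Real.exp t = Real.exp (-t) * Real.exp (2 * t) := by
          rw [← Real.exp_add]; congr 1; ring
        rw [this]; ring
      rw [h3]
      have h4 := sto_pow_abs hP hf k y
      have h5 : 0 ≤ pw t k * Real.exp (2 * t) := mul_nonneg (pw_nonneg ht k) (Real.exp_pos _).le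
      exact mul_le_of_le_one_right h5 h4
  have h1 := (abs_le.1 (test_le (heat P t) μ hwb x)).2
  rw [hw, mulVec_mulVec, ← heat_add, add_neg_cancel, mean_heat hst] at h1
  linarith

end main

set_option linter.unusedSectionVars false

section bridge
variable {Ω : Type*} [Fintype Ω] [DecidableEq Ω]

theorem delta_vecMul (x : Ω) (M : Matrix Ω Ω ℝ) : deltaMass x ᵥ* M = M x := by
  ext y
  simp [deltaMass, vecMul, dotProduct]

theorem contDistMax_eq (P : Matrix Ω Ω ℝ) (μ : Ω → ℝ) (t : ℝ) :
    contDistMax P μ t = dmax (heat P t) μ := by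
  unfold contDistMax dmax contDist
  congr 1; ext x; congr 1; ext y
  rw [← (heat_hasSum_entry P t x y).tsum_eq]
  simp only [delta_vecMul, pw]

theorem lazyDistMax_eq (P : Matrix Ω Ω ℝ) (μ : Ω → ℝ) (k : ℕ) :
    lazyDistMax P μ k = dmax (lazyM P ^ k * 1) μ := by
  unfold lazyDistMax dmax lazyDist
  simp only [delta_vecMul, Nat.floor_natCast, mul_one]

theorem aveDistMax_eq (P : Matrix Ω Ω ℝ) (μ : Ω → ℝ) (k : ℕ) :
    aveDistMax P μ k = dmax (P ^ k * lazyM P) μ := by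
  unfold aveDistMax dmax aveDist
  congr 1; ext x; congr 1; ext y
  simp only [delta_vecMul, Nat.floor_natCast]
  rw [lazyM, Matrix.mul_smul, mul_add, mul_one, ← pow_succ, Matrix.smul_apply, Matrix.add_apply,
    smul_eq_mul]
  ring

theorem ave_upper [Nonempty Ω] {μ : Ω → ℝ} {P : Matrix Ω Ω ℝ} (h : IsRevMC P μ)
    {δ t : ℝ} (hδ0 : 0 < δ) (hδ1 : δ ≤ 1) {j : ℕ}
    (hj : 64000 / (δ ^ 2 * (1 / 4) ^ 3) ≤ 2 ^ j) (ht : 8 / δ ^ 2 ≤ t)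
    (hd1 : 2 * dmax (heat P t) μ ≤ (1 / 2) ^ (2 ^ j)) (hd2 : dmax (heat P t) μ ≤ 1 / 160)
    {N : ℕ} (hN1 : (1 + δ) * t ≤ N) (hN2 : N ≤ 3 * t) :
    aveDistMax P μ N ≤ 1 / 4 := by
  obtain ⟨⟨hP, -, hμ, hst⟩, hrev⟩ := h
  rw [aveDistMax_eq]
  exact hard_core hμ hP hrev hst (lazy_sto hP) (lazy_st hst) (lazy_comm P)
    (smooth_ave hμ.1 hP hrev) hδ0 hδ1 (by norm_num) (by norm_num) hj ht hd1 (by linarith) hN1 hN2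

theorem lazy_upper [Nonempty Ω] {μ : Ω → ℝ} {P : Matrix Ω Ω ℝ} (h : IsRevMC P μ)
    {δ t : ℝ} (hδ0 : 0 < δ) (hδ1 : δ ≤ 1) {j : ℕ}
    (hj : 64000 / (δ ^ 2 * (1 / 4) ^ 3) ≤ 2 ^ j) (ht : 8 / δ ^ 2 ≤ t)
    (hd1 : 2 * dmax (heat P t) μ ≤ (1 / 2) ^ (2 ^ j)) (hd2 : dmax (heat P t) μ ≤ 1 / 160)
    {N : ℕ} (hN1 : (1 + δ) * (2 * t) ≤ N) (hN2 : N ≤ 3 * (2 * t)) :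
    lazyDistMax P μ N ≤ 1 / 4 := by
  obtain ⟨⟨hP, -, hμ, hst⟩, hrev⟩ := h
  have ht0 : 0 ≤ t := le_trans (by positivity) ht
  rw [lazyDistMax_eq]
  rw [← heat_lazy] at hd1 hd2
  exact hard_core hμ (lazy_sto hP) (lazy_rev hrev) (lazy_st hst) one_sto (vecMul_one μ)
    (Commute.one_right _) (smooth_lazy hμ.1 hP hrev) hδ0 hδ1 (by norm_num) (by norm_num) hj
    (by linarith) hd1 (by linarith) hN1 hN2

theorem frac_small {δ t : ℝ} (hδ0 : 0 < δ) (ht : 4 / δ ^ 2 ≤ t) {m : ℝ}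
    (hm : m ≤ (1 - δ) * t) : m < t ∧ t / (t - m) ^ 2 ≤ 1 / 4 := by
  have h4 : 0 < 4 / δ ^ 2 := by positivity
  have ht0 : 0 < t := by linarith
  have hδt : 0 < δ * t := by positivity
  have h1 : δ * t ≤ t - m := by linarith
  have h2 : (δ * t) ^ 2 ≤ (t - m) ^ 2 := pow_le_pow_left₀ hδt.le h1 2
  rw [div_le_iff₀ (by positivity)] at ht
  have h3 : 4 * t ≤ (t * δ ^ 2) * t := mul_le_mul_of_nonneg_right ht ht0.le
  refine ⟨by linarith, ?_⟩
  rw [div_le_iff₀ (pow_pos (by linarith) 2)]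
  have h5 : (δ * t) ^ 2 = (t * δ ^ 2) * t := by ring
  linarith

theorem ave_lower [Nonempty Ω] {μ : Ω → ℝ} {P : Matrix Ω Ω ℝ} (h : IsRevMC P μ)
    {δ t : ℝ} (hδ0 : 0 < δ) (ht : 4 / δ ^ 2 ≤ t) (ht' : 16 ≤ t)
    (hd : 3 / 4 < dmax (heat P t) μ)
    {m : ℕ} (hm : aveDistMax P μ m ≤ 1 / 4) : (1 - δ) * t < m := by
  obtain ⟨⟨hP, -, hμ, hst⟩, hrev⟩ := h
  rw [aveDistMax_eq] at hm
  by_contra hcon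
  obtain ⟨h1, h2⟩ := frac_small hδ0 ht (not_lt.1 hcon)
  have h3 := easy_core hμ hP (lazy_sto hP) h1
  have h4 := heat_le_heat_lazy (μ := μ) hP (t := t) (l := 1 / 4) (by norm_num) (by linarith)
  linarith

theorem lazy_lower [Nonempty Ω] {μ : Ω → ℝ} {P : Matrix Ω Ω ℝ} (h : IsRevMC P μ)
    {δ t : ℝ} (hδ0 : 0 < δ) (ht : 4 / δ ^ 2 ≤ t)
    (hd : 3 / 4 < dmax (heat P t) μ)
    {m : ℕ} (hm : lazyDistMax P μ m ≤ 1 / 4) : (1 - δ) * (2 * t) < m := by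
  obtain ⟨⟨hP, -, hμ, hst⟩, hrev⟩ := h
  rw [lazyDistMax_eq] at hm
  have h4 : 0 < 4 / δ ^ 2 := by positivity
  by_contra hcon
  obtain ⟨h1, h2⟩ := frac_small hδ0 (t := 2 * t) (by linarith) (not_lt.1 hcon)
  have h3 := easy_core hμ (lazy_sto hP) (one_sto) h1
  rw [mul_one, heat_lazy] at h3
  linarith

end bridge

section final
variable {Ω : ℕ → Type} [∀ n, Fintype (Ω n)] [∀ n, DecidableEq (Ω n)]
  {P : ∀ n, Matrix (Ω n) (Ω n) ℝ} {pi : ∀ n, Ω n → ℝ}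

theorem contMix_pos (hc : ContCutoff P pi) {ε : ℝ} (h0 : 0 < ε) (h1 : ε < 1) :
    ∀ᶠ n in atTop, 0 < contMix (P n) (pi n) ε ∧
      {t : ℝ | 0 ≤ t ∧ contDistMax (P n) (pi n) t ≤ ε}.Nonempty := by
  filter_upwards [(hc ε h0 h1).eventually_ne one_ne_zero] with n hn
  have hne : contMix (P n) (pi n) ε ≠ 0 := fun h => hn (by rw [h, zero_div])
  have hnn : 0 ≤ contMix (P n) (pi n) ε := Real.sInf_nonneg fun t ht => ht.1
  refine ⟨lt_of_le_of_ne hnn hne.symm, ?_⟩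
  by_contra hcon
  rw [Set.not_nonempty_iff_eq_empty] at hcon
  exact hne (by unfold contMix; rw [hcon, Real.sInf_empty])

theorem contMix_le {n : ℕ} {ε t : ℝ} (h0 : 0 ≤ t) (h : contDistMax (P n) (pi n) t ≤ ε) :
    contMix (P n) (pi n) ε ≤ t :=
  csInf_le ⟨0, fun _ hs => hs.1⟩ ⟨h0, h⟩

theorem lim_one (hc : ContCutoff P pi) {ε δ : ℝ} (h0 : 0 < ε) (h1 : ε ≤ 1 / 4) (hδ : 0 < δ) :
    ∀ᶠ n in atTop, ∃ t, contMix (P n) (pi n) (1 / 4) ≤ t ∧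
      t ≤ (1 + δ) * contMix (P n) (pi n) (1 / 4) ∧ contDistMax (P n) (pi n) t ≤ ε := by
  filter_upwards [contMix_pos hc h0 (by linarith), contMix_pos hc (ε := 1 - ε) (by linarith)
    (by linarith), contMix_pos hc (ε := 1 / 4) (by norm_num) (by norm_num),
    (hc ε h0 (by linarith)).eventually_lt_const (show (1:ℝ) < 1 + δ by linarith)]
    with n hn1 hn2 hn3 hn4
  have hb : contMix (P n) (pi n) (1 - ε) ≤ contMix (P n) (pi n) (1 / 4) :=
    le_csInf hn3.2 fun t ht => contMix_le ht.1 (ht.2.trans (by linarith))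
  rw [div_lt_iff₀ hn2.1] at hn4
  have h2 : contMix (P n) (pi n) ε < (1 + δ) * contMix (P n) (pi n) (1 / 4) :=
    hn4.trans_le (mul_le_mul_of_nonneg_left hb (by linarith))
  obtain ⟨t, ht, htl⟩ := exists_lt_of_csInf_lt hn1.2 h2
  exact ⟨t, contMix_le ht.1 (ht.2.trans h1), htl.le, ht.2⟩

theorem lim_two (hc : ContCutoff P pi) {δ : ℝ} (hδ : 0 < δ) (hδ1 : δ ≤ 1) :
    ∀ᶠ n in atTop, 3 / 4 < contDistMax (P n) (pi n) ((1 - δ) * contMix (P n) (pi n) (1 / 4)) := by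
  filter_upwards [contMix_pos hc (ε := 3 / 4) (by norm_num) (by norm_num),
    contMix_pos hc (ε := 1 / 4) (by norm_num) (by norm_num),
    (hc (1 / 4) (by norm_num) (by norm_num)).eventually_lt_const
      (show (1:ℝ) < 1 + δ by linarith)] with n hn1 hn2 hn3
  have e : (1:ℝ) - 1 / 4 = 3 / 4 := by norm_num
  rw [e, div_lt_iff₀ hn1.1] at hn3
  by_contra hcon
  have h1 := contMix_le (mul_nonneg (by linarith) hn2.1.le) (not_lt.1 hcon)
  have h2 : (1 - δ) * contMix (P n) (pi n) (1 / 4) ≤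
      (1 - δ) * ((1 + δ) * contMix (P n) (pi n) (3 / 4)) :=
    mul_le_mul_of_nonneg_left hn3.le (by linarith)
  have h3 : 0 < δ ^ 2 * contMix (P n) (pi n) (3 / 4) := mul_pos (by positivity) hn1.1
  nlinarith

theorem lim_three [∀ n, Nonempty (Ω n)] (hP : ∀ n, IsRevMC (P n) (pi n)) (hc : ContCutoff P pi)
    {K : ℝ} (hK : 0 ≤ K) :
    ∀ᶠ n in atTop, K ≤ contMix (P n) (pi n) (1 / 4) := by
  have hε : 0 < Real.exp (-(4 * K)) / 4 := by positivity
  have hε1 : Real.exp (-(4 * K)) ≤ 1 := Real.exp_le_one_iff.2 (by linarith)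
  filter_upwards [contMix_pos hc (ε := 1 / 4) (by norm_num) (by norm_num),
    lim_one hc (δ := 1) hε (by linarith) one_pos] with n hn1 hn2
  obtain ⟨t, ht1, ht2, ht3⟩ := hn2
  have h0 : 1 / 4 < contDistMax (P n) (pi n) 0 := by
    by_contra hcon
    have := contMix_le le_rfl (not_lt.1 hcon)
    linarith [hn1.1]
  rw [contDistMax_eq] at h0 ht3
  have h1 := dmax_zero_le (hP n).1.1 (hP n).1.2.2.2 (t := t) (by linarith [hn1.1])
  have h2 : dmax (heat (P n) t) (pi n) * Real.exp (2 * t) ≤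
      Real.exp (-(4 * K)) / 4 * Real.exp (2 * t) :=
    mul_le_mul_of_nonneg_right ht3 (Real.exp_pos _).le
  have h3 : Real.exp (-(4 * K)) / 4 * Real.exp (2 * t) = Real.exp (2 * t - 4 * K) / 4 := by
    rw [sub_eq_add_neg, Real.exp_add]; ring
  have h4 : 1 < Real.exp (2 * t - 4 * K) := by linarith
  rw [Real.one_lt_exp_iff] at h4
  linarith

theorem tendsto_of_sandwich {X T : ℕ → ℝ}
    (h : ∀ δ : ℝ, 0 < δ → δ ≤ 1 / 2 → ∀ᶠ n in atTop, 0 < T n ∧ (1 - 2 * δ) * T n ≤ X n ∧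
      X n ≤ (1 + 4 * δ) * T n) : Tendsto (fun n => X n / T n) atTop (nhds 1) := by
  rw [Metric.tendsto_atTop']
  intro ε hε
  have hd : 0 < min (ε / 8) (1 / 2) := by positivity
  have hd1 := min_le_left (ε / 8) (1 / 2)
  obtain ⟨N, hN⟩ := eventually_atTop.1 (h _ hd (min_le_right _ _))
  refine ⟨N, fun n hn => ?_⟩
  obtain ⟨h1, h2, h3⟩ := hN n hn.le
  rw [← le_div_iff₀ h1] at h2
  rw [← div_le_iff₀ h1] at h3
  rw [Real.dist_eq, abs_lt]
  constructor <;> linarith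

theorem upper_pre [∀ n, Nonempty (Ω n)] (hP : ∀ n, IsRevMC (P n) (pi n)) (hc : ContCutoff P pi)
    {δ : ℝ} (hδ0 : 0 < δ) (hδ1 : δ ≤ 1 / 2) :
    ∀ᶠ n in atTop,
      (∃ N : ℕ, aveDistMax (P n) (pi n) N ≤ 1 / 4 ∧
        N ≤ (1 + 4 * δ) * contMix (P n) (pi n) (1 / 4)) ∧
      (∃ N : ℕ, lazyDistMax (P n) (pi n) N ≤ 1 / 4 ∧
        N ≤ (1 + 4 * δ) * (2 * contMix (P n) (pi n) (1 / 4))) := by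
  obtain ⟨j, hj⟩ := pow_unbounded_of_one_lt (64000 / (δ ^ 2 * (1 / 4) ^ 3)) (one_lt_two (α := ℝ))
  have hε : 0 < min (1 / 160) ((1 / 2 : ℝ) ^ (2 ^ j) / 2) := by positivity
  have hε1 := min_le_left (1 / 160) ((1 / 2 : ℝ) ^ (2 ^ j) / 2)
  have hε2 := min_le_right (1 / 160) ((1 / 2 : ℝ) ^ (2 ^ j) / 2)
  filter_upwards [lim_one hc hε (by linarith) hδ0,
    lim_three hP hc (K := 8 / δ ^ 2) (by positivity),
    lim_three hP hc (K := 2 / δ) (by positivity)] with n hn1 hn2 hn3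
  obtain ⟨t, ht1, ht2, ht3⟩ := hn1
  rw [contDistMax_eq] at ht3
  set T := contMix (P n) (pi n) (1 / 4)
  rw [div_le_iff₀ hδ0] at hn3
  have hT0 : 0 < T := lt_of_lt_of_le (by positivity) hn2
  have hTδ : T * δ ≤ T * (1 / 2) := mul_le_mul_of_nonneg_left hδ1 hT0.le
  have h1 : (1 + δ) * t ≤ (1 + δ) * ((1 + δ) * T) := mul_le_mul_of_nonneg_left ht2 (by linarith)
  have h2 : (1 + δ) * ((1 + δ) * T) = T + 2 * (T * δ) + (T * δ) * δ := by ring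
  have h3 : (T * δ) * δ ≤ (T * δ) * 1 := mul_le_mul_of_nonneg_left (by linarith) (by positivity)
  have h4 : δ * t ≤ 1 / 2 * t := mul_le_mul_of_nonneg_right hδ1 (by linarith)
  have h5 : 0 ≤ δ * t := mul_nonneg hδ0.le (by linarith)
  constructor
  · have hc1 := Nat.le_ceil ((1 + δ) * t)
    have hc2 := Nat.ceil_lt_add_one (show 0 ≤ (1 + δ) * t by linarith)
    exact ⟨⌈(1 + δ) * t⌉₊, ave_upper (hP n) hδ0 (by linarith) hj.le (hn2.trans ht1)
      (by linarith) (by linarith) hc1 (by linarith), by linarith⟩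
  · have hc1 := Nat.le_ceil ((1 + δ) * (2 * t))
    have hc2 := Nat.ceil_lt_add_one (show 0 ≤ (1 + δ) * (2 * t) by linarith)
    exact ⟨⌈(1 + δ) * (2 * t)⌉₊, lazy_upper (hP n) hδ0 (by linarith) hj.le (hn2.trans ht1)
      (by linarith) (by linarith) hc1 (by linarith), by linarith⟩

theorem lower_pre [∀ n, Nonempty (Ω n)] (hP : ∀ n, IsRevMC (P n) (pi n)) (hc : ContCutoff P pi)
    {δ : ℝ} (hδ0 : 0 < δ) (hδ1 : δ ≤ 1 / 2) :
    ∀ᶠ n in atTop,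
      (∀ N : ℕ, aveDistMax (P n) (pi n) N ≤ 1 / 4 →
        (1 - 2 * δ) * contMix (P n) (pi n) (1 / 4) ≤ N) ∧
      (∀ N : ℕ, lazyDistMax (P n) (pi n) N ≤ 1 / 4 →
        (1 - 2 * δ) * (2 * contMix (P n) (pi n) (1 / 4)) ≤ N) := by
  filter_upwards [lim_two hc hδ0 (by linarith),
    lim_three hP hc (K := 2 * (4 / δ ^ 2)) (by positivity),
    lim_three hP hc (K := 32) (by norm_num)] with n hn1 hn2 hn3
  rw [contDistMax_eq] at hn1
  set T := contMix (P n) (pi n) (1 / 4)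
  have h1 : δ * T ≤ 1 / 2 * T := mul_le_mul_of_nonneg_right hδ1 (by linarith)
  have h2 : (1 - 2 * δ) * T ≤ (1 - δ) * ((1 - δ) * T) := by
    have : 0 ≤ δ ^ 2 * T := mul_nonneg (by positivity) (by linarith)
    nlinarith
  constructor
  · intro N hN
    have := ave_lower (hP n) hδ0 (by linarith) (by linarith) hn1 hN
    linarith
  · intro N hN
    have := lazy_lower (hP n) hδ0 (by linarith) hn1 hN
    linarith

end final

/-- **Corollary 1.5 of Hermon–Peres, "moreover" part.**
If a sequence of finite irreducible reversible Markov chains exhibits a continuous-time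
cutoff, then `t_ave^{(n)}/t_c^{(n)} → 1` and `t_L^{(n)}/(2 t_c^{(n)}) → 1`. -/
theorem mixing_time_ratios_of_contCutoff :
    ∀ (Ω : ℕ → Type) [∀ n, Fintype (Ω n)] [∀ n, DecidableEq (Ω n)] [∀ n, Nonempty (Ω n)]
      (P : ∀ n, Matrix (Ω n) (Ω n) ℝ) (pi : ∀ n, Ω n → ℝ),
      (∀ n, IsRevMC (P n) (pi n)) →
      ContCutoff P pi →
      Tendsto (fun n => (aveMix (P n) (pi n) (1 / 4) : ℝ) / contMix (P n) (pi n) (1 / 4))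
          atTop (nhds 1) ∧
        Tendsto (fun n => (lazyMix (P n) (pi n) (1 / 4) : ℝ) /
            (2 * contMix (P n) (pi n) (1 / 4))) atTop (nhds 1) := by
  intro Ω _ _ _ P pi hP hc
  constructor
  · refine tendsto_of_sandwich fun δ hδ0 hδ1 => ?_
    filter_upwards [upper_pre hP hc hδ0 hδ1, lower_pre hP hc hδ0 hδ1,
      contMix_pos hc (ε := 1 / 4) (by norm_num) (by norm_num)] with n hn1 hn2 hn3
    obtain ⟨N, hN1, hN2⟩ := hn1.1
    have hmem := Nat.sInf_mem (s := {t : ℕ | aveDistMax (P n) (pi n) t ≤ 1 / 4}) ⟨N, hN1⟩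
    have hle : aveMix (P n) (pi n) (1 / 4) ≤ N := Nat.sInf_le hN1
    have hle' : (aveMix (P n) (pi n) (1 / 4) : ℝ) ≤ N := by exact_mod_cast hle
    exact ⟨hn3.1, hn2.1 _ hmem, hle'.trans hN2⟩
  · refine tendsto_of_sandwich fun δ hδ0 hδ1 => ?_
    filter_upwards [upper_pre hP hc hδ0 hδ1, lower_pre hP hc hδ0 hδ1,
      contMix_pos hc (ε := 1 / 4) (by norm_num) (by norm_num)] with n hn1 hn2 hn3
    obtain ⟨N, hN1, hN2⟩ := hn1.2
    have hmem := Nat.sInf_mem (s := {t : ℕ | lazyDistMax (P n) (pi n) t ≤ 1 / 4}) ⟨N, hN1⟩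
    have hle : lazyMix (P n) (pi n) (1 / 4) ≤ N := Nat.sInf_le hN1
    have hle' : (lazyMix (P n) (pi n) (1 / 4) : ℝ) ≤ N := by exact_mod_cast hle
    exact ⟨by linarith [hn3.1], hn2.2 _ hmem, hle'.trans hN2⟩
end
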